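/- arXiv:2108.06840 — 2 statements merged into one kernel-verified Lean document; each statement's English description precedes it below -/
import Mathlib

section
/- Let d ≥ 1 be an integer and δ ∈ (0,1]. There exists d₀ = d₀(d,δ) ∈ (d/2, d) such that for every p ∈ (d₀,∞) and α > 0 there is θ = θ(α,d,δ,p) > 0 with the following Liouville property. Let F be a real-valued δ-elliptic function of symmetric d×d matrices (independent of x) with F(0) = 0, and suppose there exists a convex δ-elliptic function F̄ with F̄(0) = 0 such that sup_{τ>0} τ^{−1}|F(τm) − F̄(τm)| ≤ θ for every symmetric m with Frobenius norm |m| = 1. If u is twice continuously differentiable on ℝ^d, satisfies F(D²u(x)) = 0 for all x ∈ ℝ^d, and lim_{R→∞} R^{α−2} · inf_{l ∈ 𝓛} sup_{B_R} |u − l| = 0, where 𝓛 is the set of affine functions on ℝ^d, then u is an affine function. -/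
open MeasureTheory Metric Set Filter
open scoped ENNReal RealInnerProductSpace

noncomputable section

/-- Euclidean space `ℝ^d`. -/
abbrev E (d : ℕ) : Type := EuclideanSpace ℝ (Fin d)

/-- Frobenius norm of a `d × d` matrix. -/
def frob {d : ℕ} (m : Matrix (Fin d) (Fin d) ℝ) : ℝ :=
  Real.sqrt (∑ i, ∑ j, (m i j) ^ 2)

/-- `F` is `δ`-elliptic: `δ tr w ≤ F (m + w) - F m ≤ δ⁻¹ tr w` for symmetric `m` and
symmetric positive semidefinite `w`. -/
def Elliptic {d : ℕ} (δ : ℝ) (F : Matrix (Fin d) (Fin d) ℝ → ℝ) : Prop :=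
  ∀ m : Matrix (Fin d) (Fin d) ℝ, m.IsSymm →
    ∀ w : Matrix (Fin d) (Fin d) ℝ, w.PosSemidef →
      δ * w.trace ≤ F (m + w) - F m ∧ F (m + w) - F m ≤ δ⁻¹ * w.trace

/-- Gradient of `u : ℝ^d → ℝ` as a vector in `ℝ^d`. -/
def grad {d : ℕ} (u : E d → ℝ) (x : E d) : E d :=
  (EuclideanSpace.equiv (Fin d) ℝ).symm fun i => fderiv ℝ u x (EuclideanSpace.single i 1)

/-- Hessian matrix of `u : ℝ^d → ℝ`. -/
def hess {d : ℕ} (u : E d → ℝ) (x : E d) : Matrix (Fin d) (Fin d) ℝ :=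
  Matrix.of fun i j =>
    fderiv ℝ (fun y => fderiv ℝ u y (EuclideanSpace.single j 1)) x (EuclideanSpace.single i 1)

/-- Normalized `L_p` norm `(⨍_B |g|^p)^{1/p}` (average over `B`). -/
def nLp {d : ℕ} (p : ℝ) (B : Set (E d)) (g : E d → ℝ) : ℝ≥0∞ :=
  ((volume B)⁻¹ * ∫⁻ y in B, ENNReal.ofReal (|g y| ^ p)) ^ (1 / p)

/-- Unnormalized `L_p` norm `(∫_A |g|^p)^{1/p}`. -/
def Lpn {d : ℕ} (p : ℝ) (A : Set (E d)) (g : E d → ℝ) : ℝ≥0∞ :=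
  (∫⁻ y in A, ENNReal.ofReal (|g y| ^ p)) ^ (1 / p)

/-- Morrey norm `‖g‖_{E_{p,μ}(Ω)} = sup_{ρ>0, x∈Ω} ρ^μ (⨍_{B_ρ(x)} |g 1_Ω|^p)^{1/p}`. -/
def morrey {d : ℕ} (p μ : ℝ) (Ω : Set (E d)) (g : E d → ℝ) : ℝ≥0∞ :=
  ⨆ (ρ : ℝ) (_ : 0 < ρ) (x : E d) (_ : x ∈ Ω),
    ENNReal.ofReal (ρ ^ μ) * nLp p (ball x ρ) (Ω.indicator g)

/-- The `(θ, R₀)`-oscillation condition on `F(m, x)`. -/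
def OscCond {d : ℕ} (δ θ R₀ : ℝ) (F : Matrix (Fin d) (Fin d) ℝ → E d → ℝ) : Prop :=
  ∀ r ∈ Set.Ioc (0 : ℝ) R₀, ∀ z : E d,
    ∃ Fb : Matrix (Fin d) (Fin d) ℝ → ℝ,
      ConvexOn ℝ Set.univ Fb ∧ Elliptic δ Fb ∧ Fb 0 = 0 ∧
      ∀ m : Matrix (Fin d) (Fin d) ℝ, m.IsSymm → frob m = 1 →
        (volume (ball z r))⁻¹ *
            ∫⁻ x in ball z r,
              ⨆ (τ : ℝ) (_ : 0 < τ), ENNReal.ofReal (τ⁻¹ * |F (τ • m) x - Fb (τ • m)|)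
          ≤ ENNReal.ofReal θ

/-- The homogeneity bound `|F(ζ m, x)| ≤ ζ |F(m, x)| + K(x)` for `ζ ∈ [0,1]`. -/
def HomBound {d : ℕ} (F : Matrix (Fin d) (Fin d) ℝ → E d → ℝ) (K : E d → ℝ) : Prop :=
  ∀ ζ ∈ Set.Icc (0 : ℝ) 1, ∀ m : Matrix (Fin d) (Fin d) ℝ, m.IsSymm → ∀ x : E d,
    |F (ζ • m) x| ≤ ζ * |F m x| + K x

/-!
Second differences `u (x + h) + u (x - h) - 2 u x` of a solution of `F (D²u) = 0` are
supersolutions when `F` is convex. Doubling the variables with a quadratic penalty turns this into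
a statement about the Hessians of `u` at three nearby points, which survives, up to an arbitrarily
small error, if `F` is only close to a convex function. Gaussian barriers then give a strong minimum
principle for `u` and, with a small error, for its second differences.

Assume that second differences with step `h` are bounded by `A ‖h‖ ^ β` on a large ball, where
`1 < β < 2`. A second difference cannot be very negative: near an almost-minimum point it would be
negative on a large ball, and summing up it would make the second difference of step `n h` of order
`-n ^ 2`, which violates the bound. So `u` is almost convex, lies almost above its tangent plane,
and by the strong minimum principle stays close to it; thus its second differences of unit step are
smaller than `1`. Rescaling any solution of growth `o(R ^ β)` around a second difference that is
almost maximal, after weighting by the distance to the boundary of a large ball, normalizes that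
second difference to `1` and keeps the bound. Hence all second differences vanish and `u` is affine.
-/

open Topology
open scoped MatrixOrder

/-! ### Elliptic functions of symmetric matrices -/

section Matrices

open scoped Matrix.Norms.Frobenius

variable {d : ℕ} {X : Matrix (Fin d) (Fin d) ℝ}

lemma frob_eq_norm (X : Matrix (Fin d) (Fin d) ℝ) : frob X = ‖X‖ := by
  simp only [frob, Matrix.frobenius_norm_def, Real.sqrt_eq_rpow, Real.norm_eq_abs, Real.rpow_two,
    sq_abs]

lemma frob_nonneg (X : Matrix (Fin d) (Fin d) ℝ) : 0 ≤ frob X := Real.sqrt_nonneg _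

lemma frob_neg (X : Matrix (Fin d) (Fin d) ℝ) : frob (-X) = frob X := by
  simp only [frob_eq_norm, norm_neg]

lemma frob_ne_zero (hX : X ≠ 0) : frob X ≠ 0 := by
  rwa [frob_eq_norm, norm_ne_zero_iff]

lemma frob_smul {c : ℝ} (hc : 0 ≤ c) (X : Matrix (Fin d) (Fin d) ℝ) :
    frob (c • X) = c * frob X := by
  simp only [frob_eq_norm, norm_smul_of_nonneg hc]

lemma frob_add_le (X Y : Matrix (Fin d) (Fin d) ℝ) : frob (X + Y) ≤ frob X + frob Y := by
  simpa only [frob_eq_norm] using norm_add_le X Y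

lemma vecMulVec_self_nonneg (z : E d) : 0 ≤ Matrix.vecMulVec (z : Fin d → ℝ) z :=
  Matrix.nonneg_iff_posSemidef.2 (Matrix.posSemidef_vecMulVec_self_star (z : Fin d → ℝ))

lemma frob_le_trace (hX : 0 ≤ X) : frob X ≤ X.trace := by
  obtain ⟨B, rfl⟩ := CStarAlgebra.nonneg_iff_eq_star_mul_self.mp hX
  have htrace : (star B * B).trace = ‖B‖ * ‖B‖ := by
    rw [← frob_eq_norm, frob, Real.mul_self_sqrt (by positivity), Finset.sum_comm]
    simp [Matrix.trace, Matrix.mul_apply, Matrix.star_apply, pow_two]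
  calc frob (star B * B) ≤ ‖star B‖ * ‖B‖ := by
        rw [frob_eq_norm]; exact Matrix.frobenius_norm_mul _ _
    _ = (star B * B).trace := by
        rw [htrace, Matrix.star_eq_conjTranspose, Matrix.frobenius_norm_conjTranspose]

lemma dotProduct_mulVec_le_frob (X : Matrix (Fin d) (Fin d) ℝ) (v : Fin d → ℝ) :
    v ⬝ᵥ X.mulVec v ≤ frob X * (v ⬝ᵥ v) := by
  have hnorm : ‖WithLp.toLp 2 (X.mulVec v)‖ ≤ frob X * ‖WithLp.toLp 2 v‖ := by
    rw [frob_eq_norm, ← Matrix.frobenius_norm_replicateCol (ι := Unit),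
      ← Matrix.frobenius_norm_replicateCol (ι := Unit), Matrix.replicateCol_mulVec]
    exact Matrix.frobenius_norm_mul _ _
  have hinner (w : Fin d → ℝ) : v ⬝ᵥ w = ⟪WithLp.toLp 2 v, WithLp.toLp 2 w⟫ := by
    simp [EuclideanSpace.inner_eq_star_dotProduct, dotProduct_comm]
  rw [hinner, hinner, real_inner_self_eq_norm_mul_norm]
  calc _ ≤ ‖WithLp.toLp 2 v‖ * ‖WithLp.toLp 2 (X.mulVec v)‖ := real_inner_le_norm _ _
    _ ≤ ‖WithLp.toLp 2 v‖ * (frob X * ‖WithLp.toLp 2 v‖) := by gcongr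
    _ = frob X * (‖WithLp.toLp 2 v‖ * ‖WithLp.toLp 2 v‖) := by ring

lemma le_frob_smul_one (hX : X.IsSymm) : X ≤ frob X • (1 : Matrix (Fin d) (Fin d) ℝ) :=
  have hherm := Matrix.isHermitian_iff_isSymm.2 ((Matrix.isSymm_one.smul (frob X)).sub hX)
  .of_dotProduct_mulVec_nonneg hherm fun v => by
    rw [star_trivial, Matrix.sub_mulVec, Matrix.smul_mulVec, Matrix.one_mulVec, dotProduct_sub,
      dotProduct_smul, smul_eq_mul, sub_nonneg]
    exact dotProduct_mulVec_le_frob X v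

end Matrices

/-- The factor by which a one-sided bound on a matrix `X` with `F X = F 0` has to be multiplied to
bound the Frobenius norm of `X`, for a `δ`-elliptic `F`. -/
def oneSidedConst (d : ℕ) (δ : ℝ) : ℝ := δ⁻¹ ^ 2 * d + d

lemma oneSidedConst_nonneg (d : ℕ) (δ : ℝ) : 0 ≤ oneSidedConst d δ := by
  unfold oneSidedConst; positivity

namespace Elliptic

variable {d : ℕ} {δ : ℝ} {F : Matrix (Fin d) (Fin d) ℝ → ℝ} {X Y : Matrix (Fin d) (Fin d) ℝ}

lemma mul_trace_le (hF : Elliptic δ F) (hX : X.IsSymm) (h : X ≤ Y) :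
    δ * (Y - X).trace ≤ F Y - F X := by
  simpa using (hF X hX _ h).1

lemma le_mul_trace (hF : Elliptic δ F) (hX : X.IsSymm) (h : X ≤ Y) :
    F Y - F X ≤ δ⁻¹ * (Y - X).trace := by
  simpa using (hF X hX _ h).2

protected lemma neg (hF : Elliptic δ F) : Elliptic δ fun m => -F (-m) := by
  intro m hm w hw
  have hws : w.IsSymm := Matrix.isHermitian_iff_isSymm.1 hw.1
  have h := hF (-(m + w)) (hm.add hws).neg w hw
  rw [show -(m + w) + w = -m by abel] at h
  constructor <;> linarith

protected lemma rescale (hF : Elliptic δ F) {k : ℝ} (hk : 0 < k) :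
    Elliptic δ fun m => k * F (k⁻¹ • m) := by
  intro m hm w hw
  have h := hF (k⁻¹ • m) (hm.smul _) (k⁻¹ • w) (hw.smul (inv_nonneg.2 hk.le))
  rw [← smul_add, Matrix.trace_smul, smul_eq_mul, mul_left_comm, mul_left_comm δ⁻¹,
    inv_mul_le_iff₀ hk, le_inv_mul_iff₀ hk] at h
  rwa [← mul_sub]

-- Pass from `X` down to `X - c • 1`, then up to `Y` by a matrix of trace at least `2 c s ‖z‖²`.
lemma add_le_of_rankOne_le (hδ : 0 < δ) (hF : Elliptic δ F) (hX : X.IsSymm) {c s : ℝ}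
    (hc : 0 ≤ c) (hs : 0 ≤ s) {z : E d}
    (h : X + c • ((2 * s) • Matrix.vecMulVec z z - 1) ≤ Y) :
    F X + c * (2 * s * δ * ‖z‖ ^ 2 - δ⁻¹ * d) ≤ F Y := by
  set M : Matrix (Fin d) (Fin d) ℝ := X - c • 1 with hM
  have hMs : M.IsSymm := hX.sub (Matrix.isSymm_one.smul _)
  have hrank : (0 : Matrix (Fin d) (Fin d) ℝ) ≤ (2 * s * c) • Matrix.vecMulVec z z :=
    smul_nonneg (by positivity) (vecMulVec_self_nonneg z)
  have hMX : M ≤ X := sub_le_self _ (smul_nonneg hc zero_le_one)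
  have hMY : M + (2 * s * c) • Matrix.vecMulVec z z ≤ Y := by
    convert h using 1
    module
  have hdown := hF.le_mul_trace hMs hMX
  have hup := hF.mul_trace_le hMs ((le_add_of_nonneg_right hrank).trans hMY)
  have htrace : 2 * s * c * ‖z‖ ^ 2 ≤ (Y - M).trace := by
    have := (Matrix.le_iff.1 hMY).trace_nonneg
    rw [← sub_sub, Matrix.trace_sub, Matrix.trace_smul, Matrix.trace_vecMulVec] at this
    rw [EuclideanSpace.real_norm_sq_eq]
    simpa [dotProduct, pow_two] using this
  have htraceX : (X - M).trace = c * d := by simp [hM]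
  rw [htraceX] at hdown
  linarith [mul_le_mul_of_nonneg_left htrace hδ.le]

lemma frob_le_of_neg_smul_one_le (hδ : 0 < δ) (hF : Elliptic δ F) (hFX : F X = F 0)
    {C : ℝ} (hC : 0 ≤ C) (h : -(C • 1) ≤ X) : frob X ≤ C * oneSidedConst d δ := by
  set M : Matrix (Fin d) (Fin d) ℝ := C • 1 with hM
  have hMs : M.IsSymm := Matrix.isSymm_one.smul _
  have hM0 : 0 ≤ M := smul_nonneg hC zero_le_one
  have hMtrace : M.trace = C * d := by simp [hM]
  have hXM : δ * (X - -M).trace ≤ δ⁻¹ * (C * d) := by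
    rw [← hMtrace]
    have hzero := hF.le_mul_trace hMs.neg (neg_nonpos.2 hM0)
    rw [zero_sub, neg_neg] at hzero
    exact (hF.mul_trace_le hMs.neg h).trans (hFX ▸ hzero)
  rw [← le_inv_mul_iff₀ hδ] at hXM
  calc frob X = frob ((X - -M) + -M) := by rw [sub_add_cancel]
    _ ≤ frob (X - -M) + frob M := by rw [← frob_neg M]; exact frob_add_le _ _
    _ ≤ (X - -M).trace + M.trace :=
        add_le_add (frob_le_trace (sub_nonneg.2 h)) (frob_le_trace hM0)
    _ ≤ C * oneSidedConst d δ := by rw [hMtrace, oneSidedConst]; linarith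

lemma frob_le_of_le_smul_one (hδ : 0 < δ) (hF : Elliptic δ F) (hFX : F X = F 0)
    {C : ℝ} (hC : 0 ≤ C) (h : X ≤ C • 1) : frob X ≤ C * oneSidedConst d δ := by
  rw [← frob_neg]
  exact frob_le_of_neg_smul_one_le hδ hF.neg (by simp [hFX]) hC (neg_le_neg h)

end Elliptic

/-- The class of nonlinearities in the theorem: `δ`-elliptic functions vanishing at the origin whose
distance to some convex `δ`-elliptic function grows at most linearly, with slope `θ`. -/
structure NearConvex {d : ℕ} (δ θ : ℝ) (F : Matrix (Fin d) (Fin d) ℝ → ℝ) : Prop where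
  elliptic : Elliptic δ F
  map_zero : F 0 = 0
  exists_convexOn : ∃ Fb : Matrix (Fin d) (Fin d) ℝ → ℝ, ConvexOn ℝ {m | m.IsSymm} Fb ∧
    Elliptic δ Fb ∧ ∀ m : Matrix (Fin d) (Fin d) ℝ, m.IsSymm → |F m - Fb m| ≤ θ * frob m

namespace NearConvex

variable {d : ℕ} {δ θ : ℝ} {F : Matrix (Fin d) (Fin d) ℝ → ℝ}

lemma of_sup_le {Fb : Matrix (Fin d) (Fin d) ℝ → ℝ} (hF : Elliptic δ F) (hF0 : F 0 = 0)
    (hconv : ConvexOn ℝ {m : Matrix (Fin d) (Fin d) ℝ | m.IsSymm} Fb) (hFb : Elliptic δ Fb)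
    (hFb0 : Fb 0 = 0)
    (hclose : ∀ m : Matrix (Fin d) (Fin d) ℝ, m.IsSymm → frob m = 1 →
      ∀ τ : ℝ, 0 < τ → τ⁻¹ * |F (τ • m) - Fb (τ • m)| ≤ θ) : NearConvex δ θ F := by
  refine ⟨hF, hF0, Fb, hconv, hFb, fun m hm => ?_⟩
  obtain rfl | hne := eq_or_ne m 0
  · simp [frob, hF0, hFb0]
  · have hpos : 0 < frob m := (frob_nonneg m).lt_of_ne' (frob_ne_zero hne)
    have hunit : frob ((frob m)⁻¹ • m) = 1 := by
      rw [frob_smul (inv_nonneg.2 hpos.le), inv_mul_cancel₀ hpos.ne']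
    have h := hclose _ (hm.smul _) hunit _ hpos
    rwa [smul_inv_smul₀ hpos.ne', inv_mul_le_iff₀ hpos, mul_comm] at h

protected lemma rescale (hF : NearConvex δ θ F) {k : ℝ} (hk : 0 < k) :
    NearConvex δ θ fun m => k * F (k⁻¹ • m) := by
  obtain ⟨hell, hF0, Fb, hconv, hFb, hclose⟩ := hF
  refine ⟨hell.rescale hk, by simp [hF0], fun m => k * Fb (k⁻¹ • m), ⟨hconv.1, ?_⟩,
    hFb.rescale hk, fun m hm => ?_⟩
  · intro X hX Y hY a b ha hb hab
    have h := hconv.2 (hX.smul k⁻¹) (hY.smul k⁻¹) ha hb hab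
    rw [← smul_comm k⁻¹, ← smul_comm k⁻¹, ← smul_add] at h
    calc _ ≤ k * (a • Fb (k⁻¹ • X) + b • Fb (k⁻¹ • Y)) := mul_le_mul_of_nonneg_left h hk.le
      _ = _ := by simp only [smul_eq_mul]; ring
  · rw [← mul_sub, abs_mul, abs_of_pos hk, ← le_inv_mul_iff₀ hk, mul_left_comm,
      ← frob_smul (inv_nonneg.2 hk.le)]
    exact hclose _ (hm.smul _)

-- Convexity bounds `Fb` from above at `(Y + Z) / 2`, and ellipticity bounds it from below there.
lemma gap_le_of_rankOne_le (hδ : 0 < δ) (hθ : 0 ≤ θ) (hF : NearConvex δ θ F)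
    {X Y Z : Matrix (Fin d) (Fin d) ℝ} (hX : X.IsSymm) (hY : Y.IsSymm) (hZ : Z.IsSymm)
    (hFX : F X = 0) (hFY : F Y = 0) (hFZ : F Z = 0) {k c s : ℝ} (hk : 0 ≤ k) (hc : 0 ≤ c)
    (hs : 0 ≤ s) {z : E d} (hYk : -(k • 1) ≤ Y) (hZk : -(k • 1) ≤ Z)
    (h : X + c • ((2 * s) • Matrix.vecMulVec z z - 1) ≤ (1 / 2 : ℝ) • Y + (1 / 2 : ℝ) • Z) :
    c * (2 * s * δ * ‖z‖ ^ 2 - δ⁻¹ * d) ≤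
      θ * (k * oneSidedConst d δ + (k * oneSidedConst d δ + c) * oneSidedConst d δ) := by
  obtain ⟨hell, hF0, Fb, hconv, hFb, hclose⟩ := hF
  have hfrobY := hell.frob_le_of_neg_smul_one_le hδ (hFY.trans hF0.symm) hk hYk
  have hfrobZ := hell.frob_le_of_neg_smul_one_le hδ (hFZ.trans hF0.symm) hk hZk
  set M := k * oneSidedConst d δ
  have hM0 : 0 ≤ M := mul_nonneg hk (oneSidedConst_nonneg d δ)
  have hXle : X ≤ (M + c) • 1 := by
    have hYM : Y ≤ M • 1 :=
      (le_frob_smul_one hY).trans (smul_le_smul_of_nonneg_right hfrobY zero_le_one)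
    have hZM : Z ≤ M • 1 :=
      (le_frob_smul_one hZ).trans (smul_le_smul_of_nonneg_right hfrobZ zero_le_one)
    have hrank := smul_nonneg (mul_nonneg hc (mul_nonneg zero_le_two hs)) (vecMulVec_self_nonneg z)
    calc X ≤ (1 / 2 : ℝ) • Y + (1 / 2 : ℝ) • Z - c • ((2 * s) • Matrix.vecMulVec z z - 1) :=
          le_sub_iff_add_le.2 h
      _ = (1 / 2 : ℝ) • Y + (1 / 2 : ℝ) • Z + c • 1 - (c * (2 * s)) • Matrix.vecMulVec z z := by
          module
      _ ≤ (1 / 2 : ℝ) • Y + (1 / 2 : ℝ) • Z + c • 1 := sub_le_self _ hrank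
      _ ≤ (1 / 2 : ℝ) • M • 1 + (1 / 2 : ℝ) • M • 1 + c • 1 := by gcongr
      _ = (M + c) • 1 := by module
  have hfrobX := hell.frob_le_of_le_smul_one hδ (hFX.trans hF0.symm) (by positivity) hXle
  have hupper : Fb ((1 / 2 : ℝ) • Y + (1 / 2 : ℝ) • Z) ≤ θ * M := by
    have hmid := hconv.2 hY hZ one_half_pos.le one_half_pos.le (add_halves 1)
    have hFbY := (abs_le.1 (hclose Y hY)).1
    have hFbZ := (abs_le.1 (hclose Z hZ)).1
    rw [smul_eq_mul, smul_eq_mul] at hmid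
    linarith [mul_le_mul_of_nonneg_left hfrobY hθ, mul_le_mul_of_nonneg_left hfrobZ hθ]
  have hlower := hFb.add_le_of_rankOne_le hδ hX hc hs h
  have hFbX := (abs_le.1 (hclose X hX)).2
  linarith [mul_le_mul_of_nonneg_left hfrobX hθ]

end NearConvex

/-! ### Hessians -/

section Hessian

variable {d : ℕ} {u v : E d → ℝ}

lemma hess_apply_of_hasFDerivAt {D : E d → E d →L[ℝ] ℝ} {B : E d →L[ℝ] E d →L[ℝ] ℝ} {x : E d}
    (hD : ∀ y, HasFDerivAt u (D y) y) (hB : HasFDerivAt D B x) (i j : Fin d) :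
    hess u x i j = B (EuclideanSpace.single i 1) (EuclideanSpace.single j 1) := by
  have hu : fderiv ℝ u = D := funext fun y => (hD y).fderiv
  simp only [hess, Matrix.of_apply, hu, (hB.clm_apply (hasFDerivAt_const _ x)).fderiv]
  simp

lemma hasFDerivAt_of_contDiff (hu : ContDiff ℝ 2 u) (x : E d) :
    HasFDerivAt u (fderiv ℝ u x) x :=
  (hu.differentiable two_ne_zero x).hasFDerivAt

lemma hasFDerivAt_fderiv_of_contDiff (hu : ContDiff ℝ 2 u) (x : E d) :
    HasFDerivAt (fderiv ℝ u) (fderiv ℝ (fderiv ℝ u) x) x :=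
  ((hu.fderiv_right (m := 1) (by norm_num)).differentiable one_ne_zero x).hasFDerivAt

lemma hess_apply (hu : ContDiff ℝ 2 u) (x : E d) (i j : Fin d) :
    hess u x i j =
      fderiv ℝ (fderiv ℝ u) x (EuclideanSpace.single i 1) (EuclideanSpace.single j 1) :=
  hess_apply_of_hasFDerivAt (hasFDerivAt_of_contDiff hu) (hasFDerivAt_fderiv_of_contDiff hu x) i j

lemma hess_isSymm (hu : ContDiff ℝ 2 u) (x : E d) : (hess u x).IsSymm := by
  ext i j
  rw [Matrix.transpose_apply, hess_apply hu, hess_apply hu]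
  exact (hu.contDiffAt.isSymmSndFDerivAt (by simp)).eq _ _

lemma dotProduct_hess_mulVec (hu : ContDiff ℝ 2 u) (x ξ : E d) :
    ξ ⬝ᵥ (hess u x).mulVec ξ = fderiv ℝ (fderiv ℝ u) x ξ ξ := by
  have hsum : ξ = ∑ i, ξ i • EuclideanSpace.single i (1 : ℝ) := by
    ext j; simp [Pi.single_apply]
  conv_rhs => rw [hsum]
  simp only [map_sum, map_smul, _root_.sum_apply, _root_.smul_apply, smul_eq_mul, dotProduct,
    Matrix.mulVec, hess_apply hu, Finset.mul_sum]
  rw [Finset.sum_comm]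
  exact Finset.sum_congr rfl fun i _ => Finset.sum_congr rfl fun j _ => by ring

lemma hess_add (hu : ContDiff ℝ 2 u) (hv : ContDiff ℝ 2 v) (x : E d) :
    hess (fun y => u y + v y) x = hess u x + hess v x := by
  ext i j
  rw [Matrix.add_apply, hess_apply hu, hess_apply hv]
  exact hess_apply_of_hasFDerivAt (fun y => (hasFDerivAt_of_contDiff hu y).add
    (hasFDerivAt_of_contDiff hv y))
    ((hasFDerivAt_fderiv_of_contDiff hu x).add (hasFDerivAt_fderiv_of_contDiff hv x)) i j

lemma hess_const_mul (hu : ContDiff ℝ 2 u) (c : ℝ) (x : E d) :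
    hess (fun y => c * u y) x = c • hess u x := by
  ext i j
  rw [Matrix.smul_apply, hess_apply hu]
  exact hess_apply_of_hasFDerivAt (fun y => (hasFDerivAt_of_contDiff hu y).const_mul c)
    ((hasFDerivAt_fderiv_of_contDiff hu x).const_smul c) i j

lemma hess_sub (hu : ContDiff ℝ 2 u) (hv : ContDiff ℝ 2 v) (x : E d) :
    hess (fun y => u y - v y) x = hess u x - hess v x := by
  ext i j
  rw [Matrix.sub_apply, hess_apply hu, hess_apply hv]
  exact hess_apply_of_hasFDerivAt (fun y => (hasFDerivAt_of_contDiff hu y).sub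
    (hasFDerivAt_of_contDiff hv y))
    ((hasFDerivAt_fderiv_of_contDiff hu x).sub (hasFDerivAt_fderiv_of_contDiff hv x)) i j

lemma hess_comp_add_left (u : E d → ℝ) (c x : E d) :
    hess (fun y => u (c + y)) x = hess u (c + x) := by
  ext i j
  simp only [hess, Matrix.of_apply, fderiv_comp_add_left]
  rw [fderiv_comp_add_left (f := fun y => fderiv ℝ u y (EuclideanSpace.single j 1))]

lemma hess_comp_smul (hu : ContDiff ℝ 2 u) (r : ℝ) (x : E d) :
    hess (fun y => u (r • y)) x = r ^ 2 • hess u (r • x) := by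
  have hscale (y : E d) : HasFDerivAt (fun y : E d => r • y)
      (r • ContinuousLinearMap.id ℝ (E d)) y := (hasFDerivAt_id y).const_smul r
  ext i j
  rw [Matrix.smul_apply, hess_apply hu]
  refine (hess_apply_of_hasFDerivAt (u := fun y => u (r • y))
    (fun y => (hasFDerivAt_of_contDiff hu _).comp y (hscale y))
    (((hasFDerivAt_fderiv_of_contDiff hu _).comp x (hscale x)).clm_comp
      (hasFDerivAt_const _ x)) i j).trans ?_
  simp [pow_two, mul_assoc]

-- `innerSL` is conjugate-linear in its first argument, which hides its derivative from `simp`.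
lemma exists_inner_continuousLinearMap (d : ℕ) :
    ∃ I : E d →L[ℝ] E d →L[ℝ] ℝ, ∀ v w, I v w = ⟪v, w⟫ :=
  ⟨innerSL ℝ, fun _ _ => rfl⟩

lemma hess_norm_sq (x : E d) : hess (fun y => ‖y‖ ^ 2) x = (2 : ℝ) • 1 := by
  obtain ⟨I, hI⟩ := exists_inner_continuousLinearMap d
  have hgrad (y : E d) : HasFDerivAt (fun y => ‖y‖ ^ 2) ((2 • I) y) y :=
    (hasStrictFDerivAt_norm_sq y).hasFDerivAt.congr_fderiv (by ext w; simp [hI])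
  ext i j
  rw [hess_apply_of_hasFDerivAt hgrad (2 • I).hasFDerivAt i j]
  simp [hI, EuclideanSpace.inner_single_left, Matrix.one_apply]

lemma hess_nonneg_of_isLocalMin (hu : ContDiff ℝ 2 u) {x : E d} (h : IsLocalMin u x) :
    0 ≤ hess u x := by
  rw [Matrix.nonneg_iff_posSemidef]
  refine .of_dotProduct_mulVec_nonneg (Matrix.isHermitian_iff_isSymm.2 (hess_isSymm hu x))
    fun w => ?_
  set ξ : E d := WithLp.toLp 2 w
  set g : ℝ → ℝ := fun t => u (x + t • ξ)
  have hline (t : ℝ) : HasDerivAt (fun t : ℝ => x + t • ξ) ξ t := by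
    simpa using ((hasDerivAt_id t).smul_const ξ).const_add x
  have hg' : deriv g = fun t => fderiv ℝ u (x + t • ξ) ξ := funext fun t =>
    ((hasFDerivAt_of_contDiff hu _).comp_hasDerivAt t (hline t)).deriv
  have hg'' : deriv (deriv g) 0 = ξ ⬝ᵥ (hess u x).mulVec ξ := by
    rw [hg', dotProduct_hess_mulVec hu]
    simpa using (((hasFDerivAt_fderiv_of_contDiff hu _).comp_hasDerivAt 0 (hline 0)).clm_apply
      (hasDerivAt_const 0 ξ)).deriv
  have hgc : ContinuousAt g 0 := (hu.continuous.comp (by fun_prop)).continuousAt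
  have hmin : IsLocalMin g 0 :=
    IsLocalMin.comp_continuous (g := fun t : ℝ => x + t • ξ) (by simpa using h) (by fun_prop)
  by_contra! hneg
  rw [star_trivial, ← hg''] at hneg
  have hmax := isLocalMax_of_deriv_deriv_neg hneg hmin.deriv_eq_zero hgc
  have hconst : g =ᶠ[𝓝 0] fun _ => g 0 := by
    filter_upwards [hmin, hmax] with t h₁ h₂ using le_antisymm h₂ h₁
  rw [hconst.deriv.deriv_eq] at hneg
  simp at hneg

/-- The Gaussian `exp (-s ‖x - p‖ ^ 2)`, the barrier of the comparison arguments. -/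
def gaussianBump (s : ℝ) (p x : E d) : ℝ := Real.exp (-(s * ‖x - p‖ ^ 2))

lemma contDiff_gaussianBump (s : ℝ) (p : E d) : ContDiff ℝ 2 (gaussianBump s p) :=
  ((contDiff_norm_sq ℝ).comp (contDiff_id.sub contDiff_const)).const_smul s |>.neg.exp

lemma hess_gaussianBump (s : ℝ) (p x : E d) :
    hess (gaussianBump s p) x = (2 * s * gaussianBump s p x) •
      ((2 * s) • Matrix.vecMulVec (x - p : E d) (x - p : E d) - 1) := by
  obtain ⟨I, hI⟩ := exists_inner_continuousLinearMap d
  have hbump (y : E d) : HasFDerivAt (gaussianBump s p)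
      ((-(2 * s) * gaussianBump s p y) • I (y - p)) y := by
    refine (((hasFDerivAt_id y).sub_const p).norm_sq.const_mul s |>.neg.exp).congr_fderiv ?_
    ext w
    simp [gaussianBump, hI]
    ring
  have hgrad := ((hbump x).const_mul (-(2 * s))).smul
    (I.hasFDerivAt.comp x ((hasFDerivAt_id x).sub_const p))
  ext i j
  rw [hess_apply_of_hasFDerivAt hbump hgrad i j]
  simp [hI, EuclideanSpace.inner_single_right, Matrix.one_apply, Matrix.vecMulVec_apply,
    eq_comm (a := j)]
  split_ifs <;> ring

end Hessian

/-! ### Second differences -/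

/-- The symmetric second difference `u (x + h) + u (x - h) - 2 u x`. -/
def secondDiff {V : Type*} [AddGroup V] (u : V → ℝ) (h x : V) : ℝ :=
  u (x + h) + u (x - h) - 2 * u x

lemma secondDiff_zero_left {V : Type*} [AddGroup V] (u : V → ℝ) (x : V) :
    secondDiff u 0 x = 0 := by
  rw [secondDiff, add_zero, sub_zero]
  ring

section SecondDiff

variable {V : Type*} [NormedAddCommGroup V] {u : V → ℝ}

lemma add_mem_closedBall_add_norm {x₀ x e h : V} {R : ℝ} (hx : x ∈ closedBall x₀ R)
    (he : ‖e‖ ≤ ‖h‖) : x + e ∈ closedBall x₀ (R + ‖h‖) := by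
  rw [mem_closedBall_iff_norm, add_sub_right_comm]
  exact norm_add_le_of_le (mem_closedBall_iff_norm.1 hx) he

lemma lipschitzOnWith_secondDiff {Λ : NNReal} {x₀ h : V} {R : ℝ}
    (hu : LipschitzOnWith Λ u (closedBall x₀ (R + ‖h‖))) :
    LipschitzOnWith (4 * Λ) (secondDiff u h) (closedBall x₀ R) := by
  refine LipschitzOnWith.of_dist_le_mul fun x hx y hy => ?_
  have hshift {e : V} (he : ‖e‖ ≤ ‖h‖) : |u (x + e) - u (y + e)| ≤ Λ * dist x y := by
    have := hu.dist_le_mul _ (add_mem_closedBall_add_norm hx he) _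
      (add_mem_closedBall_add_norm hy he)
    rwa [Real.dist_eq, dist_add_right] at this
  have hpos := abs_le.1 (hshift le_rfl)
  have hneg := abs_le.1 (hshift (norm_neg h).le)
  have hzero := abs_le.1 (hshift (e := 0) (by simp))
  rw [← sub_eq_add_neg, ← sub_eq_add_neg] at hneg
  rw [add_zero, add_zero] at hzero
  rw [Real.dist_eq, NNReal.coe_mul, NNReal.coe_ofNat, abs_le, secondDiff, secondDiff]
  constructor <;> linarith [hpos.1, hpos.2, hneg.1, hneg.2, hzero.1, hzero.2]

end SecondDiff

/-! ### Comparison with Gaussian barriers -/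

/-- `u` is a classical solution on the whole space of `F (D²u) = 0` for some `F` in the class
`NearConvex δ θ`. The class of such `u` is closed under rescaling and subtraction of affine
functions, although `F` may change. -/
structure NearConvexSolution {d : ℕ} (δ θ : ℝ) (u : E d → ℝ) : Prop where
  contDiff : ContDiff ℝ 2 u
  exists_nearConvex : ∃ F : Matrix (Fin d) (Fin d) ℝ → ℝ, NearConvex δ θ F ∧
    ∀ x, F (hess u x) = 0

/-- The comparison principle, up to an error `η`, between `w` and the functions
`m + κ exp (-s ‖x - p‖ ^ 2)` on the annulus `a ≤ ‖x - p‖ ≤ b`. -/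
def GaussianComparison {d : ℕ} (w : E d → ℝ) (s κ η : ℝ) (p : E d) (a b : ℝ) : Prop :=
  ∀ m, (∀ x ∈ sphere p a ∪ sphere p b, m + κ * gaussianBump s p x ≤ w x) →
    ∀ x ∈ closedBall p b \ ball p a, m + κ * gaussianBump s p x - η ≤ w x

section DoubledVariables

variable {V : Type*} [NormedAddCommGroup V] {k η : ℝ} {Λ : NNReal}

lemma isLocalMin_of_isMinOn_penalized {v : V → ℝ} {α : V} (hΛk : Λ < k)
    (hkη : 2 * (Λ : ℝ) ^ 2 ≤ η * k) (hv : |v α - v 0| ≤ Λ * ‖α‖)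
    (hmin : IsMinOn (fun α' => v α' + k * ‖α'‖ ^ 2) (closedBall 0 1) α) :
    IsLocalMin (fun α' => v α' + k * ‖α'‖ ^ 2) α ∧ v 0 - η / 2 ≤ v α := by
  have hk : 0 < k := Λ.coe_nonneg.trans_lt hΛk
  have hzero : v α + k * ‖α‖ ^ 2 ≤ v 0 := by
    simpa using hmin (mem_closedBall_self zero_le_one)
  have hsmall : k * ‖α‖ ≤ Λ := by
    rcases (norm_nonneg α).eq_or_lt with h | h
    · simp [← h]
    · refine le_of_mul_le_mul_right ?_ h
      linarith [(abs_le.1 hv).1]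
  refine ⟨hmin.isLocalMin (mem_of_superset (isOpen_ball.mem_nhds ?_) ball_subset_closedBall), ?_⟩
  · rw [mem_ball_zero_iff]
    exact lt_of_mul_lt_mul_left ((hsmall.trans_lt hΛk).trans_eq (mul_one k).symm) hk.le
  · have hΛα : Λ * ‖α‖ ≤ η / 2 := by
      refine le_of_mul_le_mul_left ?_ hk
      linarith [mul_le_mul_of_nonneg_left hsmall Λ.coe_nonneg]
    linarith [(abs_le.1 hv).1]

-- Doubling the variables at `y ± h` produces points where the Hessian of `u` is bounded below by
-- `-2k`, while the points move so little that the second difference changes by at most `η`.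
lemma exists_penalized_secondDiff_min [ProperSpace V] {u g : V → ℝ} (hu : Continuous u)
    (hg : Continuous g) {K : Set V} (hK : IsCompact K) (hne : K.Nonempty) {p h : V} {b : ℝ}
    (hKb : K ⊆ closedBall p b) (hLip : LipschitzOnWith Λ u (closedBall p (b + ‖h‖ + 1)))
    (hΛk : Λ < k) (hkη : 2 * (Λ : ℝ) ^ 2 ≤ η * k) :
    ∃ y ∈ K, ∃ α β : V,
      (∀ z ∈ K, secondDiff u h y - g y - η ≤ secondDiff u h z - g z) ∧
      IsLocalMin (fun α' => u (y + h + α') + k * ‖α'‖ ^ 2) α ∧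
      IsLocalMin (fun β' => u (y - h + β') + k * ‖β'‖ ^ 2) β ∧
      IsMinOn (fun z => u (z + h + α) + u (z - h + β) - 2 * u z - g z) K y := by
  set B : Set V := closedBall 0 1
  set Φ : V × V × V → ℝ := fun q => u (q.1 + h + q.2.1) + u (q.1 - h + q.2.2) - 2 * u q.1
    - g q.1 + k * (‖q.2.1‖ ^ 2 + ‖q.2.2‖ ^ 2) with hΦ
  have hB0 : (0 : V) ∈ B := mem_closedBall_self zero_le_one
  have hB : IsCompact B := isCompact_closedBall _ _
  obtain ⟨⟨y, α, β⟩, ⟨hy, hα, hβ⟩, hmin⟩ := (hK.prod (hB.prod hB)).exists_isMinOn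
    (hne.prod ⟨(0, 0), hB0, hB0⟩) (show Continuous Φ by fun_prop).continuousOn
  have hΦmin {z α' β'} (hz : z ∈ K) (hα' : α' ∈ B) (hβ' : β' ∈ B) :
      Φ (y, α, β) ≤ Φ (z, α', β') := hmin ⟨hz, hα', hβ'⟩
  simp only [hΦ] at hΦmin
  have hshift {e γ : V} (he : ‖e‖ = ‖h‖) (hγ : γ ∈ B) :
      |u (y + e + γ) - u (y + e + 0)| ≤ Λ * ‖γ‖ := by
    have hmem {γ : V} (hγ : γ ∈ B) : y + e + γ ∈ closedBall p (b + ‖h‖ + 1) := by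
      rw [mem_closedBall_iff_norm, show y + e + γ - p = (y - p) + e + γ by abel]
      have := mem_closedBall_iff_norm.1 (hKb hy)
      exact norm_add₃_le.trans (by gcongr; exacts [he.le, mem_closedBall_zero_iff.1 hγ])
    simpa [dist_eq_norm] using hLip.dist_le_mul _ (hmem hγ) _ (hmem hB0)
  obtain ⟨hαmin, hαval⟩ := isLocalMin_of_isMinOn_penalized (v := fun γ => u (y + h + γ)) hΛk hkη
    (hshift rfl hα) (isMinOn_iff.2 fun γ hγ => by linarith [hΦmin hy hγ hβ])
  obtain ⟨hβmin, hβval⟩ := isLocalMin_of_isMinOn_penalized (v := fun γ => u (y - h + γ)) hΛk hkη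
    (by simpa only [sub_eq_add_neg] using hshift (norm_neg h) hβ)
    (isMinOn_iff.2 fun γ hγ => by linarith [hΦmin hy hα hγ])
  refine ⟨y, hy, α, β, fun z hz => ?_, hαmin, hβmin, isMinOn_iff.2 fun z hz => ?_⟩
  · have := hΦmin hz hB0 hB0
    have hpen : 0 ≤ k * (‖α‖ ^ 2 + ‖β‖ ^ 2) := by
      have := Λ.coe_nonneg.trans_lt hΛk
      positivity
    simp only [add_zero, norm_zero] at this hαval hβval
    simp only [secondDiff]
    linarith
  · linarith [hΦmin hz hα hβ]

end DoubledVariables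

section Comparison

variable {d : ℕ} {δ θ s a b κ η : ℝ} {Λ : NNReal} {u : E d → ℝ} {p x y h α β : E d}

lemma gaussianBump_pos (s : ℝ) (p x : E d) : 0 < gaussianBump s p x := Real.exp_pos _

lemma gaussianBump_le_one (hs : 0 ≤ s) (p x : E d) : gaussianBump s p x ≤ 1 :=
  Real.exp_le_one_iff.2 (neg_nonpos.2 (by positivity))

lemma isCompact_annulus (p : E d) (a b : ℝ) : IsCompact (closedBall p b \ ball p a) :=
  (isCompact_closedBall p b).diff isOpen_ball

lemma annulus_mem_nhds (hx : x ∈ closedBall p b \ ball p a) (hxs : x ∉ sphere p a ∪ sphere p b) :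
    closedBall p b \ ball p a ∈ 𝓝 x := by
  simp only [Set.mem_sdiff, mem_closedBall, mem_ball, not_lt, mem_union, mem_sphere,
    not_or] at hx hxs
  refine mem_of_superset ((isOpen_ball.sdiff isClosed_closedBall).mem_nhds
    (⟨lt_of_le_of_ne hx.1 hxs.2, not_le.2 (lt_of_le_of_ne' hx.2 hxs.1)⟩ :
      x ∈ ball p b \ closedBall p a)) ?_
  exact sdiff_subset_sdiff ball_subset_closedBall ball_subset_closedBall

-- Outside the ball `ball p a`, the positive curvature of the bump in the radial direction
-- outweighs its negative curvature in the remaining directions.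
lemma barrier_gap_pos (hδ : 0 < δ) (hsa : d < 2 * δ ^ 2 * a ^ 2 * s) :
    0 < 2 * s * δ * a ^ 2 - δ⁻¹ * d := by
  rw [sub_pos, inv_mul_lt_iff₀ hδ]
  linarith

lemma barrier_gap_le (hδ : 0 < δ) (ha : 0 ≤ a) (hs : 0 ≤ s) (hx : x ∉ ball p a) :
    2 * s * δ * a ^ 2 - δ⁻¹ * d ≤ 2 * s * δ * ‖x - p‖ ^ 2 - δ⁻¹ * d := by
  have : a ≤ ‖x - p‖ := by simpa [dist_eq_norm] using hx
  gcongr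

theorem NearConvexSolution.gaussianComparison (hu : NearConvexSolution δ θ u) (hδ : 0 < δ)
    (ha : 0 ≤ a) (hκ : 0 < κ) (hsa : d < 2 * δ ^ 2 * a ^ 2 * s) (p : E d) (b : ℝ) :
    GaussianComparison u s κ 0 p a b := by
  obtain ⟨hcd, F, hF, hFu⟩ := hu
  have hs : 0 < s := pos_of_mul_pos_right (d.cast_nonneg.trans_lt hsa) (by positivity)
  intro m hbd x hx
  have hbump := contDiff_const (c := κ) |>.mul (contDiff_gaussianBump s p)
  obtain ⟨y, hy, hmin⟩ := (isCompact_annulus p a b).exists_isMinOn ⟨x, hx⟩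
    (hcd.sub hbump).continuous.continuousOn
  by_contra! hlt
  have hybd : y ∉ sphere p a ∪ sphere p b := fun h => by
    have hyx : u y - κ * gaussianBump s p y ≤ u x - κ * gaussianBump s p x := hmin hx
    linarith [hbd y h]
  have hhess := hess_nonneg_of_isLocalMin (hcd.sub hbump)
    (hmin.isLocalMin (annulus_mem_nhds hy hybd))
  rw [hess_sub hcd hbump, hess_const_mul (contDiff_gaussianBump s p), hess_gaussianBump,
    smul_smul, sub_nonneg] at hhess
  have hG := gaussianBump_pos s p y
  have h := hF.elliptic.add_le_of_rankOne_le hδ Matrix.isSymm_zero (by positivity) hs.le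
    ((zero_add _).trans_le hhess)
  rw [hF.map_zero, hFu, zero_add] at h
  have hgap := (barrier_gap_pos hδ hsa).trans_le (barrier_gap_le hδ ha hs.le hy.2)
  exact h.not_gt (by positivity)

lemma hess_add_smul_le_of_isMinOn_doubled (hu : ContDiff ℝ 2 u)
    (hy : closedBall p b \ ball p a ∈ 𝓝 y)
    (hmin : IsMinOn (fun z => u (z + h + α) + u (z - h + β) - 2 * u z - κ * gaussianBump s p z)
      (closedBall p b \ ball p a) y) :
    hess u y + (κ * s * gaussianBump s p y) •
        ((2 * s) • Matrix.vecMulVec (y - p : E d) (y - p : E d) - 1) ≤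
      (1 / 2 : ℝ) • hess u (y + h + α) + (1 / 2 : ℝ) • hess u (y - h + β) := by
  have hbump := contDiff_const (c := κ) |>.mul (contDiff_gaussianBump s p)
  have hshift (c : E d) : ContDiff ℝ 2 fun z => u (c + z) :=
    hu.comp (contDiff_const.add contDiff_id)
  have htwo := (contDiff_const (c := (2 : ℝ))).mul hu
  have hfun : (fun z => u (z + h + α) + u (z - h + β) - 2 * u z - κ * gaussianBump s p z) =
      fun z => u (h + α + z) + u (-h + β + z) - 2 * u z - κ * gaussianBump s p z := by
    funext z
    rw [add_assoc, add_comm z, sub_eq_add_neg z, add_assoc z, add_comm z]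
  rw [hfun] at hmin
  have hhess := hess_nonneg_of_isLocalMin
    ((((hshift _).add (hshift _)).sub htwo).sub hbump) (hmin.isLocalMin hy)
  rw [hess_sub (((hshift _).add (hshift _)).sub htwo) hbump,
    hess_sub ((hshift _).add (hshift _)) htwo, hess_add (hshift _) (hshift _), hess_const_mul hu,
    hess_const_mul (contDiff_gaussianBump s p), hess_comp_add_left, hess_comp_add_left,
    hess_gaussianBump] at hhess
  rw [← sub_nonneg]
  convert smul_nonneg (one_half_pos (α := ℝ)).le hhess using 1
  rw [show y + h + α = h + α + y by abel, show y - h + β = -h + β + y by abel]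
  module

lemma neg_smul_one_le_hess_of_isLocalMin (hu : ContDiff ℝ 2 u) {c : E d} {k : ℝ}
    (hmin : IsLocalMin (fun α' => u (c + α') + k * ‖α'‖ ^ 2) α) :
    -((2 * k) • 1) ≤ hess u (c + α) := by
  have hshift : ContDiff ℝ 2 fun z => u (c + z) := hu.comp (contDiff_const.add contDiff_id)
  have hpen := (contDiff_const (c := k)).mul (contDiff_norm_sq ℝ (n := 2) (E := E d))
  have hhess := hess_nonneg_of_isLocalMin (hshift.add hpen) hmin
  rw [hess_add hshift hpen, hess_comp_add_left, hess_const_mul (contDiff_norm_sq ℝ),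
    hess_norm_sq, smul_smul, mul_comm k] at hhess
  exact neg_le_iff_add_nonneg.2 hhess

-- Threshold on `θ` below which `NearConvex.gap_le_of_rankOne_le` contradicts `barrier_gap_le`.
lemma exists_nearConvex_gap_lt (d : ℕ) (hδ : 0 < δ) (hκ : 0 < κ) (hs : 0 < s)
    (hsa : d < 2 * δ ^ 2 * a ^ 2 * s) (b : ℝ) {k : ℝ} (hk : 0 ≤ k) :
    ∃ θ, 0 < θ ∧ ∀ (p x : E d), x ∈ closedBall p b →
      θ * (k * oneSidedConst d δ + (k * oneSidedConst d δ + κ * s * gaussianBump s p x) *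
        oneSidedConst d δ) <
      κ * s * gaussianBump s p x * (2 * s * δ * a ^ 2 - δ⁻¹ * d) := by
  have hgap := barrier_gap_pos hδ hsa
  have hosc := oneSidedConst_nonneg d δ
  set M := k * oneSidedConst d δ + (k * oneSidedConst d δ + κ * s) * oneSidedConst d δ with hMdef
  set c₀ := κ * s * Real.exp (-(s * b ^ 2)) * (2 * s * δ * a ^ 2 - δ⁻¹ * d) with hc₀
  have : 0 ≤ M := by positivity
  have : 0 < c₀ := by positivity
  refine ⟨c₀ / (M + 1), by positivity, fun p x hx => ?_⟩
  have hxb : ‖x - p‖ ≤ b := by simpa [dist_eq_norm] using hx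
  have hlower : Real.exp (-(s * b ^ 2)) ≤ gaussianBump s p x := by
    unfold gaussianBump; gcongr
  have hupper : κ * s * gaussianBump s p x ≤ κ * s :=
    mul_le_of_le_one_right (by positivity) (gaussianBump_le_one hs.le p x)
  calc _ ≤ c₀ / (M + 1) * M := by rw [hMdef]; gcongr
    _ < c₀ / (M + 1) * (M + 1) := by gcongr; exact lt_add_one M
    _ = c₀ := div_mul_cancel₀ _ (by positivity)
    _ ≤ _ := by rw [hc₀]; gcongr

theorem exists_gaussianComparison_secondDiff (d : ℕ) (Λ : NNReal) (hδ : 0 < δ) (ha : 0 ≤ a)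
    (hκ : 0 < κ) (hη : 0 < η) (hsa : d < 2 * δ ^ 2 * a ^ 2 * s) (b : ℝ) :
    ∃ θ, 0 < θ ∧ ∀ u : E d → ℝ, NearConvexSolution δ θ u → ∀ h p : E d,
      LipschitzOnWith Λ u (closedBall p (b + ‖h‖ + 1)) →
      GaussianComparison (secondDiff u h) s κ η p a b := by
  have hs : 0 < s := pos_of_mul_pos_right (d.cast_nonneg.trans_lt hsa) (by positivity)
  obtain ⟨k, hΛk, hkη⟩ : ∃ k : ℝ, Λ < k ∧ 2 * (Λ : ℝ) ^ 2 ≤ η * k :=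
    ((eventually_gt_atTop (Λ : ℝ)).and
      ((tendsto_id.const_mul_atTop hη).eventually_ge_atTop _)).exists
  have hk : 0 ≤ 2 * k := by linarith [Λ.coe_nonneg]
  obtain ⟨θ, hθ, hgap⟩ := exists_nearConvex_gap_lt d hδ hκ hs hsa b hk
  refine ⟨θ, hθ, fun u ⟨hcd, F, hF, hFu⟩ h p hLip m hbd x hx => ?_⟩
  by_contra! hlt
  obtain ⟨y, hy, α, β, hval, hαmin, hβmin, hmin⟩ := exists_penalized_secondDiff_min
    (g := fun z => κ * gaussianBump s p z) hcd.continuous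
    (continuous_const.mul (contDiff_gaussianBump s p).continuous)
    (isCompact_annulus p a b) ⟨x, hx⟩ (fun z hz => hz.1) hLip hΛk hkη
  have hybd : y ∉ sphere p a ∪ sphere p b := fun hyb => by linarith [hbd y hyb, hval x hx]
  have hG := gaussianBump_pos s p y
  have hle := hF.gap_le_of_rankOne_le hδ hθ.le (hess_isSymm hcd _) (hess_isSymm hcd _)
    (hess_isSymm hcd _) (hFu _) (hFu _) (hFu _) hk (by positivity) hs.le
    (neg_smul_one_le_hess_of_isLocalMin hcd hαmin) (neg_smul_one_le_hess_of_isLocalMin hcd hβmin)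
    (hess_add_smul_le_of_isMinOn_doubled hcd (annulus_mem_nhds hy hybd) hmin)
  have hbarrier := barrier_gap_le hδ ha hs.le hy.2
  refine (hgap p y hy.1).not_ge (le_trans ?_ hle)
  gcongr

end Comparison

/-! ### Strong minimum principles -/

section StrongMinimum

variable {d : ℕ} {δ σ T : ℝ}

-- If `w p > m + σ`, the barrier centred at `p` lifts `w` above `m` by a fixed amount at `x₀`.
lemma exists_le_add_of_gaussianComparison {Λ : NNReal} {a s : ℝ} (hσ : 0 < σ) (hT : 0 ≤ T)
    (hs : 0 < s) (ha : a ≤ 1) (haΛ : Λ * a ≤ σ / 2) :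
    ∃ η, 0 < η ∧ ∀ (w : E d → ℝ) (x₀ : E d) (m : ℝ),
      (∀ p ∈ closedBall x₀ T, GaussianComparison w s (σ / 2) η p a (T + 1)) →
      LipschitzOnWith Λ w (closedBall x₀ (T + 1)) →
      (∀ x ∈ closedBall x₀ (2 * T + 1), m ≤ w x) → w x₀ ≤ m + η →
      ∀ x ∈ closedBall x₀ T, w x ≤ m + σ := by
  set κ := σ / 2 * (Real.exp (-(s * T ^ 2)) - Real.exp (-(s * (T + 1) ^ 2))) with hκ
  have hκpos : 0 < κ := by
    refine mul_pos (half_pos hσ) (sub_pos.2 (Real.exp_lt_exp.2 ?_))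
    gcongr
    exact lt_add_one T
  refine ⟨min (κ / 4) (σ / 4), by positivity, fun w x₀ m hcomp hLip hm hx₀ p hp => ?_⟩
  have hηκ := min_le_left (κ / 4) (σ / 4)
  have hησ := min_le_right (κ / 4) (σ / 4)
  by_contra! hlt
  have hnear : ∀ x ∈ closedBall p a, m + σ / 2 ≤ w x := fun x hx => by
    have hball : closedBall p a ⊆ closedBall x₀ (T + 1) :=
      closedBall_subset_closedBall' (by linarith [mem_closedBall.1 hp])
    have hdist := hLip.dist_le_mul x (hball hx) p
      (closedBall_subset_closedBall (le_add_of_nonneg_right zero_le_one) hp)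
    rw [Real.dist_eq] at hdist
    linarith [(abs_le.1 hdist).1, mul_le_mul_of_nonneg_left (mem_closedBall.1 hx) Λ.coe_nonneg]
  by_cases hx₀a : x₀ ∈ ball p a
  · linarith [hnear x₀ (ball_subset_closedBall hx₀a)]
  have hx₀T : ‖x₀ - p‖ ≤ T := by rwa [← mem_closedBall_iff_norm, mem_closedBall_comm]
  have hlower := hcomp p hp (m - σ / 2 * Real.exp (-(s * (T + 1) ^ 2))) ?_ x₀
    ⟨mem_closedBall_iff_norm.2 (by linarith), hx₀a⟩
  · have hbump : Real.exp (-(s * T ^ 2)) ≤ gaussianBump s p x₀ := by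
      unfold gaussianBump
      gcongr
    linarith [mul_le_mul_of_nonneg_left hbump (half_pos hσ).le]
  · rintro x (hx | hx)
    · have hbump := mul_le_of_le_one_right (half_pos hσ).le (gaussianBump_le_one hs.le p x)
      have hexp : 0 < σ / 2 * Real.exp (-(s * (T + 1) ^ 2)) := by positivity
      linarith [hnear x (sphere_subset_closedBall hx)]
    · have hball : closedBall p (T + 1) ⊆ closedBall x₀ (2 * T + 1) :=
        closedBall_subset_closedBall' (by linarith [mem_closedBall.1 hp])
      rw [gaussianBump, mem_sphere_iff_norm.1 hx, sub_add_cancel]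
      exact hm x (hball (sphere_subset_closedBall hx))

lemma exists_barrier_parameters (d : ℕ) (hδ : 0 < δ) (Λ : NNReal) (hσ : 0 < σ) :
    ∃ a s : ℝ, 0 < a ∧ 0 < s ∧ a ≤ 1 ∧ Λ * a ≤ σ / 2 ∧ d < 2 * δ ^ 2 * a ^ 2 * s := by
  have := Λ.coe_nonneg
  set a := min 1 (σ / (2 * (Λ + 1)))
  have ha0 : 0 < a := by positivity
  refine ⟨a, (d + 1) / (δ ^ 2 * a ^ 2), ha0, by positivity, min_le_left _ _, ?_, ?_⟩
  · calc Λ * a ≤ (Λ + 1) * (σ / (2 * (Λ + 1))) := by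
          gcongr
          exacts [le_add_of_nonneg_right zero_le_one, min_le_right _ _]
      _ = σ / 2 := by field_simp
  · have hval : 2 * δ ^ 2 * a ^ 2 * ((d + 1) / (δ ^ 2 * a ^ 2)) = 2 * (d + 1) := by
      field_simp
    rw [hval]
    linarith [d.cast_nonneg (α := ℝ)]

theorem exists_strongMinPrinciple (d : ℕ) (hδ : 0 < δ) (hσ : 0 < σ) (hT : 0 ≤ T) (Λ : NNReal) :
    ∃ η, 0 < η ∧ ∀ (θ : ℝ) (u : E d → ℝ), NearConvexSolution δ θ u → ∀ (x₀ : E d) (m : ℝ),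
      LipschitzOnWith Λ u (closedBall x₀ (T + 1)) →
      (∀ x ∈ closedBall x₀ (2 * T + 1), m ≤ u x) → u x₀ ≤ m + η →
      ∀ x ∈ closedBall x₀ T, u x ≤ m + σ := by
  obtain ⟨a, s, ha, hs, ha1, haΛ, hsa⟩ := exists_barrier_parameters d hδ Λ hσ
  obtain ⟨η, hη, hmin⟩ := exists_le_add_of_gaussianComparison (d := d) hσ hT hs ha1 haΛ
  refine ⟨η, hη, fun θ u hu x₀ m => hmin u x₀ m fun p _ m hm x hx => ?_⟩
  linarith [hu.gaussianComparison hδ ha.le (half_pos hσ) hsa p _ m hm x hx]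

theorem exists_strongMinPrinciple_secondDiff (d : ℕ) (hδ : 0 < δ) (hσ : 0 < σ) (hT : 0 ≤ T)
    (Λ : NNReal) (H : ℝ) :
    ∃ η, 0 < η ∧ ∃ θ, 0 < θ ∧ ∀ u : E d → ℝ, NearConvexSolution δ θ u → ∀ (h x₀ : E d) (m : ℝ),
      ‖h‖ ≤ H → LipschitzOnWith Λ u (closedBall x₀ (2 * T + H + 2)) →
      (∀ x ∈ closedBall x₀ (2 * T + 1), m ≤ secondDiff u h x) → secondDiff u h x₀ ≤ m + η →
      ∀ x ∈ closedBall x₀ T, secondDiff u h x ≤ m + σ := by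
  obtain ⟨a, s, ha, hs, ha1, haΛ, hsa⟩ := exists_barrier_parameters d hδ (4 * Λ) hσ
  obtain ⟨η, hη, hmin⟩ := exists_le_add_of_gaussianComparison (d := d) hσ hT hs ha1 haΛ
  obtain ⟨θ, hθ, hcomp⟩ :=
    exists_gaussianComparison_secondDiff d Λ hδ ha.le (half_pos hσ) hη hsa (T + 1)
  refine ⟨η, hη, θ, hθ, fun u hu h x₀ m hh hLip =>
    hmin _ x₀ m (fun p hp => hcomp u hu h p (hLip.mono ?_)) ?_⟩
  · exact closedBall_subset_closedBall' (by linarith [mem_closedBall.1 hp])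
  · exact lipschitzOnWith_secondDiff
      (hLip.mono (closedBall_subset_closedBall (by linarith)))

end StrongMinimum

/-! ### Zygmund bounds and Taylor remainders -/

/-- The Hölder–Zygmund condition `|u (x + h) + u (x - h) - 2 u x| ≤ A ‖h‖ ^ β` for all points `x`
of the closed ball of radius `R` about `x₀` and all steps `h` of length at most `R`. -/
def ZygmundBound {V : Type*} [NormedAddCommGroup V] (A β : ℝ) (u : V → ℝ) (x₀ : V) (R : ℝ) :
    Prop :=
  ∀ x ∈ closedBall x₀ R, ∀ h, ‖h‖ ≤ R → |secondDiff u h x| ≤ A * ‖h‖ ^ β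

/-- The remainder of the first-order Taylor expansion of `u` about `x₀`. -/
def taylorRemainder {V : Type*} [NormedAddCommGroup V] [NormedSpace ℝ V] (u : V → ℝ)
    (x₀ x : V) : ℝ :=
  u x - u x₀ - fderiv ℝ u x₀ (x - x₀)

section Zygmund

variable {V : Type*} [NormedAddCommGroup V] {u : V → ℝ} {A β R : ℝ} {x x₀ h : V}

lemma ZygmundBound.mono (hZ : ZygmundBound A β u x₀ R) {r : ℝ} (hr : r + dist x x₀ ≤ R) :
    ZygmundBound A β u x r := fun y hy h hh =>
  hZ y (closedBall_subset_closedBall' hr hy) h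
    (hh.trans ((le_add_of_nonneg_right dist_nonneg).trans hr))

variable [NormedSpace ℝ V]

lemma hasFDerivAt_taylorRemainder (hu : DifferentiableAt ℝ u x) (x₀ : V) :
    HasFDerivAt (taylorRemainder u x₀) (fderiv ℝ u x - fderiv ℝ u x₀) x :=
  (hu.hasFDerivAt.sub_const (u x₀)).sub
    (((fderiv ℝ u x₀).hasFDerivAt).comp x ((hasFDerivAt_id x).sub_const x₀))

lemma secondDiff_taylorRemainder (u : V → ℝ) (x₀ : V) :
    secondDiff (taylorRemainder u x₀) = secondDiff u := by
  ext h x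
  simp only [secondDiff, taylorRemainder, map_sub, map_add]
  ring

lemma taylorRemainder_self (u : V → ℝ) (x₀ : V) : taylorRemainder u x₀ x₀ = 0 := by
  simp [taylorRemainder]

lemma norm_two_pow_inv_smul (k : ℕ) (h : V) :
    ‖((2 : ℝ) ^ k)⁻¹ • h‖ = ((2 : ℝ) ^ k)⁻¹ * ‖h‖ := by
  rw [norm_smul_of_nonneg (by positivity)]

lemma norm_two_pow_inv_smul_le (k : ℕ) (h : V) : ‖((2 : ℝ) ^ k)⁻¹ • h‖ ≤ ‖h‖ := by
  rw [norm_two_pow_inv_smul]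
  exact mul_le_of_le_one_left (norm_nonneg h) (inv_le_one_of_one_le₀ (one_le_pow₀ one_le_two))

lemma two_pow_inv_smul_eq_add (k : ℕ) (h : V) :
    ((2 : ℝ) ^ k)⁻¹ • h = ((2 : ℝ) ^ (k + 1))⁻¹ • h + ((2 : ℝ) ^ (k + 1))⁻¹ • h := by
  rw [← add_smul, ← two_mul, pow_succ, mul_inv_rev, mul_inv_cancel_left₀ two_ne_zero]

lemma two_pow_mul_norm_rpow (k : ℕ) (h : V) :
    2 ^ k * ‖((2 : ℝ) ^ k)⁻¹ • h‖ ^ β = (2 / 2 ^ β) ^ k * ‖h‖ ^ β := by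
  rw [norm_two_pow_inv_smul, Real.mul_rpow (by positivity) (norm_nonneg h),
    Real.inv_rpow (by positivity), ← Real.rpow_natCast, ← Real.rpow_mul zero_le_two, mul_comm _ β,
    Real.rpow_mul zero_le_two, Real.rpow_natCast, Real.rpow_natCast, div_pow]
  ring

lemma two_lt_two_rpow (hβ : 1 < β) : 2 < (2 : ℝ) ^ β := by
  simpa using Real.rpow_lt_rpow_of_exponent_lt one_lt_two hβ

-- Consecutive dyadic difference quotients differ by a second difference, so the bound on second
-- differences makes them converge geometrically to the derivative.
theorem abs_taylorRemainder_add_le (hβ : 1 < β) (hu : DifferentiableAt ℝ u x)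
    (hZ : ZygmundBound A β u x ‖h‖) :
    |taylorRemainder u x (x + h)| ≤ A / (2 ^ β - 2) * ‖h‖ ^ β := by
  have h2 := two_lt_two_rpow hβ
  set a : ℕ → ℝ := fun k => 2 ^ k * (u (x + ((2 : ℝ) ^ k)⁻¹ • h) - u x) with ha
  have hlim : Tendsto a atTop (𝓝 (fderiv ℝ u x h)) :=
    (hu.hasFDerivAt.lim_real h).comp (tendsto_pow_atTop_atTop_of_one_lt one_lt_two)
  have hstep (k : ℕ) : dist (a k) (a (k + 1)) ≤ A * ‖h‖ ^ β / 2 ^ β * (2 / 2 ^ β) ^ k := by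
    set g := ((2 : ℝ) ^ (k + 1))⁻¹ • h
    have hgh : ‖g‖ ≤ ‖h‖ := norm_two_pow_inv_smul_le _ h
    have heq : a k - a (k + 1) = 2 ^ k * secondDiff u g (x + g) := by
      have hgg : ((2 : ℝ) ^ k)⁻¹ • h = g + g := two_pow_inv_smul_eq_add k h
      simp only [ha, secondDiff, hgg, add_sub_cancel_right, add_assoc x g g]
      ring
    calc dist (a k) (a (k + 1)) = 2 ^ k * |secondDiff u g (x + g)| := by
          rw [Real.dist_eq, heq, abs_mul, abs_of_pos (by positivity)]
      _ ≤ 2 ^ k * (A * ‖g‖ ^ β) := by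
          gcongr
          exact hZ _ (by simpa using hgh) g hgh
      _ = A / 2 * (2 ^ (k + 1) * ‖g‖ ^ β) := by ring
      _ = A * ‖h‖ ^ β / 2 ^ β * (2 / 2 ^ β) ^ k := by
          rw [two_pow_mul_norm_rpow]
          ring
  have hdist := dist_le_of_le_geometric_of_tendsto₀ _ _
    ((div_lt_one (by positivity)).2 h2) hstep hlim
  have hsum : A * ‖h‖ ^ β / 2 ^ β / (1 - 2 / 2 ^ β) = A / (2 ^ β - 2) * ‖h‖ ^ β := by
    have := (sub_pos.2 h2).ne'
    field_simp
  rw [hsum, Real.dist_eq] at hdist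
  simpa [ha, taylorRemainder] using hdist

theorem exists_eq_add_of_secondDiff_eq_zero (hu : DifferentiableAt ℝ u 0)
    (h0 : ∀ h x, secondDiff u h x = 0) (x : V) : u x = u 0 + fderiv ℝ u 0 x := by
  have hrem := abs_taylorRemainder_add_le (A := 0) (h := x) one_lt_two hu
    fun y _ h _ => by simp [h0]
  rw [zero_div, zero_mul, abs_nonpos_iff, taylorRemainder, zero_add, sub_zero] at hrem
  linarith

theorem exists_lipschitzOnWith_taylorRemainder (hβ : 1 < β) (hA : 0 ≤ A) {ρ : ℝ} (hρ : 0 < ρ) :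
    ∃ Λ : NNReal, ∀ u : V → ℝ, Differentiable ℝ u → ∀ x₀, ZygmundBound A β u x₀ (2 * ρ) →
      LipschitzOnWith Λ (taylorRemainder u x₀) (closedBall x₀ ρ) := by
  set C := A / (2 ^ β - 2)
  have hC0 : 0 ≤ C := div_nonneg hA (sub_pos.2 (two_lt_two_rpow hβ)).le
  set D := C * (2 * ρ) ^ β with hD
  refine ⟨⟨3 * D / ρ, by positivity⟩, fun u hu x₀ hZ => ?_⟩
  set v := taylorRemainder u x₀ with hv
  have hvd (x : V) : DifferentiableAt ℝ v x :=
    (hasFDerivAt_taylorRemainder (hu x) x₀).differentiableAt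
  have htaylor {w : V → ℝ} (hw : Differentiable ℝ w) {x h : V} (hZ : ZygmundBound A β w x ‖h‖)
      (hh : ‖h‖ ≤ 2 * ρ) : |taylorRemainder w x (x + h)| ≤ D :=
    (abs_taylorRemainder_add_le hβ (hw x) hZ).trans
      (by rw [hD]; gcongr)
  have hvD {x : V} (hx : dist x x₀ ≤ 2 * ρ) : |v x| ≤ D := by
    rw [dist_eq_norm] at hx
    simpa [hv] using htaylor hu (hZ.mono (x := x₀) (r := ‖x - x₀‖) (by simpa)) hx
  refine (convex_closedBall x₀ ρ).lipschitzOnWith_of_nnnorm_fderiv_le (𝕜 := ℝ)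
    (fun x _ => hvd x) fun x hx => ?_
  refine (fderiv ℝ v x).opNorm_bound_of_ball_bound hρ (3 * D) fun y hy => ?_
  rw [mem_closedBall] at hx
  rw [mem_closedBall_zero_iff] at hy
  have hZx : ZygmundBound A β v x ‖y‖ := by
    simpa only [ZygmundBound, hv, secondDiff_taylorRemainder] using
      hZ.mono (x := x) (r := ‖y‖) (by linarith)
  have hrem := abs_le.1 (htaylor hvd hZx (by linarith))
  have hvx := abs_le.1 (hvD (x := x) (by linarith))
  have hxy : dist (x + y) x₀ ≤ 2 * ρ := by
    linarith [dist_triangle (x + y) x x₀, dist_self_add_left y x]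
  have hvxy := abs_le.1 (hvD hxy)
  rw [taylorRemainder, add_sub_cancel_left] at hrem
  rw [Real.norm_eq_abs, abs_le]
  constructor <;> linarith [hrem.1, hrem.2, hvx.1, hvx.2, hvxy.1, hvxy.2]

end Zygmund

namespace NearConvexSolution

variable {d : ℕ} {δ θ : ℝ} {u : E d → ℝ}

protected lemma taylorRemainder (hu : NearConvexSolution δ θ u) (x₀ : E d) :
    NearConvexSolution δ θ (taylorRemainder u x₀) := by
  obtain ⟨hcd, F, hF, heq⟩ := hu
  have hhess (x : E d) : hess (_root_.taylorRemainder u x₀) x = hess u x := by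
    ext i j
    rw [hess_apply hcd]
    exact hess_apply_of_hasFDerivAt
      (fun y => hasFDerivAt_taylorRemainder (hcd.differentiable two_ne_zero y) x₀)
      ((hasFDerivAt_fderiv_of_contDiff hcd x).sub_const _) i j
  refine ⟨?_, F, hF, fun x => (congrArg F (hhess x)).trans (heq x)⟩
  unfold _root_.taylorRemainder
  fun_prop

protected lemma rescale (hu : NearConvexSolution δ θ u) {c r : ℝ} (hc : 0 < c) (hr : r ≠ 0)
    (x₀ : E d) : NearConvexSolution δ θ fun y => c * u (x₀ + r • y) := by
  obtain ⟨hcd, F, hF, heq⟩ := hu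
  have hcd' : ContDiff ℝ 2 fun y => u (x₀ + y) := by fun_prop
  have hk : 0 < c * r ^ 2 := by positivity
  refine ⟨by fun_prop, _, hF.rescale hk, fun y => ?_⟩
  have hhess : hess (fun y => c * u (x₀ + r • y)) y = (c * r ^ 2) • hess u (x₀ + r • y) := by
    rw [hess_const_mul (by fun_prop), hess_comp_smul hcd', hess_comp_add_left, smul_smul]
  simp only [hhess, inv_smul_smul₀ hk.ne', heq, mul_zero]

end NearConvexSolution

lemma secondDiff_rescale {V : Type*} [AddCommGroup V] [Module ℝ V] (u : V → ℝ) (c r : ℝ)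
    (x₀ h y : V) :
    secondDiff (fun z => c * u (x₀ + r • z)) h y = c * secondDiff u (r • h) (x₀ + r • y) := by
  simp only [secondDiff, smul_add, smul_sub, ← add_assoc, ← add_sub_assoc]
  ring

/-! ### Almost convexity -/

section AlmostConvexity

lemma secondDiff_add_two_nsmul {V : Type*} [AddCommGroup V] (u : V → ℝ) (h x : V) (n : ℕ) :
    secondDiff u ((n + 2) • h) x = 2 * secondDiff u ((n + 1) • h) x - secondDiff u (n • h) x +
      secondDiff u h (x + (n + 1) • h) + secondDiff u h (x - (n + 1) • h) := by
  have hadd : x + (n + 1) • h + h = x + (n + 2) • h := by module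
  have hadd_sub : x + (n + 1) • h - h = x + n • h := by module
  have hsub_add : x - (n + 1) • h + h = x - n • h := by module
  have hsub : x - (n + 1) • h - h = x - (n + 2) • h := by module
  simp only [secondDiff, hadd, hadd_sub, hsub_add, hsub]
  ring

lemma secondDiff_nsmul_le {V : Type*} [NormedAddCommGroup V] {u : V → ℝ} {h x : V} {c : ℝ} {n : ℕ}
    (hc : ∀ y ∈ closedBall x (n * ‖h‖), secondDiff u h y ≤ c) :
    secondDiff u (n • h) x ≤ n ^ 2 * c := by
  suffices secondDiff u (n • h) x ≤ n ^ 2 * c ∧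
      secondDiff u ((n + 1) • h) x - secondDiff u (n • h) x ≤ (2 * n + 1) * c from this.1
  induction n with
  | zero =>
    simpa [secondDiff_zero_left] using hc
  | succ n ih =>
    have hmono : (n : ℝ) * ‖h‖ ≤ (n + 1 : ℕ) * ‖h‖ := by gcongr; exact n.le_succ
    obtain ⟨hle, hdiff⟩ := ih fun y hy => hc y (closedBall_subset_closedBall hmono hy)
    have hstep : ‖(n + 1) • h‖ ≤ (n + 1 : ℕ) * ‖h‖ := norm_nsmul_le
    have hadd := hc (x + (n + 1) • h) (by simpa using hstep)
    have hsub := hc (x - (n + 1) • h) (by simpa using hstep)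
    push_cast
    constructor <;> linarith [secondDiff_add_two_nsmul u h x n]

lemma exists_almost_minimal_on_closedBall {X : Type*} [PseudoMetricSpace X] {f : X → ℝ} {η R : ℝ}
    (hη : 0 ≤ η) (hR : 0 ≤ R) {J : ℕ} {x : X}
    (hJ : ∀ z ∈ closedBall x (J * R), f x - J * η < f z) :
    ∃ y ∈ closedBall x (J * R), f y ≤ f x ∧ ∀ z ∈ closedBall y R, f y - η ≤ f z := by
  by_contra! hdescend
  have hchain : ∀ j ≤ J, ∃ y ∈ closedBall x (j * R), f y ≤ f x - j * η := by
    intro j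
    induction j with
    | zero => exact fun _ => ⟨x, by simp, by simp⟩
    | succ j ih =>
      intro hj
      obtain ⟨y, hy, hfy⟩ := ih (by lia)
      have hjJ : (j : ℝ) ≤ J := by exact_mod_cast (Nat.le_succ j).trans hj
      obtain ⟨z, hz, hfz⟩ := hdescend y
        (closedBall_subset_closedBall (mul_le_mul_of_nonneg_right hjJ hR) hy)
        (hfy.trans (sub_le_self _ (by positivity)))
      refine ⟨z, ?_, by push_cast; linarith⟩
      rw [mem_closedBall] at hy hz ⊢
      push_cast
      linarith [dist_triangle z y x]
  obtain ⟨y, hy, hfy⟩ := hchain J le_rfl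
  exact (hJ y hy).not_ge hfy

lemma exists_nat_mul_rpow_lt {β c H : ℝ} (hβ : β < 2) (hc : 0 < c) (hH : 0 ≤ H) (A : ℝ) :
    ∃ n : ℕ, A * (n * H) ^ β < c * n ^ 2 := by
  have hlim : Tendsto (fun n : ℕ => (n : ℝ) ^ (2 - β)) atTop atTop :=
    (tendsto_rpow_atTop (sub_pos.2 hβ)).comp tendsto_natCast_atTop_atTop
  obtain ⟨n, hn, hn0⟩ :=
    ((hlim.eventually_gt_atTop (A * H ^ β / c)).and (eventually_gt_atTop 0)).exists
  have hn0 : (0 : ℝ) < n := by exact_mod_cast hn0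
  refine ⟨n, ?_⟩
  calc A * (n * H) ^ β = n ^ β * (A * H ^ β) := by rw [Real.mul_rpow hn0.le hH]; ring
    _ < n ^ β * (n ^ (2 - β) * c) :=
      mul_lt_mul_of_pos_left ((div_lt_iff₀ hc).1 hn) (by positivity)
    _ = c * n ^ 2 := by
      rw [← mul_assoc, ← Real.rpow_add hn0, add_sub_cancel, Real.rpow_two, mul_comm]

variable {δ β A ε H : ℝ}

-- A very negative second difference spreads by the minimum principle to a ball of radius `n ‖h‖`
-- around an almost-minimum point; summing it up contradicts `β < 2` for the step `n h`.
theorem exists_neg_le_secondDiff (d : ℕ) (hδ : 0 < δ) (hβ : 1 < β) (hβ2 : β < 2) (hA : 0 ≤ A)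
    (hε : 0 < ε) (hH : 0 ≤ H) :
    ∃ K, 0 < K ∧ ∃ θ, 0 < θ ∧ ∀ u : E d → ℝ, NearConvexSolution δ θ u → ∀ x,
      ZygmundBound A β u x K → ∀ h, ‖h‖ ≤ H → -ε ≤ secondDiff u h x := by
  obtain ⟨n, hn⟩ := exists_nat_mul_rpow_lt hβ2 (half_pos hε) hH A
  set T := n * H with hT
  have hT0 : 0 ≤ T := by positivity
  obtain ⟨Λ, hLip⟩ := exists_lipschitzOnWith_taylorRemainder (V := E d) hβ hA
    (by positivity : 0 < 2 * T + H + 2)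
  obtain ⟨η, hη, θ, hθ, hmin⟩ :=
    exists_strongMinPrinciple_secondDiff d hδ (half_pos hε) hT0 Λ H
  obtain ⟨J, hJ⟩ := exists_nat_gt (A * H ^ β / η)
  rw [div_lt_iff₀ hη] at hJ
  refine ⟨J * (2 * T + 1) + 2 * (2 * T + H + 2), by positivity, θ, hθ,
    fun u hu x hZ h hh => ?_⟩
  by_contra! hlt
  have hJ0 : 0 ≤ J * (2 * T + 1) := by positivity
  obtain ⟨y, hy, hyx, hyη⟩ := exists_almost_minimal_on_closedBall (f := secondDiff u h) hη.le
    (by positivity : 0 ≤ 2 * T + 1) (J := J) (x := x) fun z hz => by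
      have hz := hZ z (closedBall_subset_closedBall (by linarith) hz) h (by linarith)
      have hhH : A * ‖h‖ ^ β ≤ A * H ^ β := by gcongr
      linarith [(abs_le.1 hz).1]
  have hspread : ∀ z ∈ closedBall y (n * ‖h‖), secondDiff u h z ≤ -(ε / 2) := fun z hz => by
    have hZy := hZ.mono (x := y) (r := 2 * (2 * T + H + 2)) (by linarith [mem_closedBall.1 hy])
    have hzT : z ∈ closedBall y T := closedBall_subset_closedBall (by rw [hT]; gcongr) hz
    have := hmin _ (hu.taylorRemainder y) h y (secondDiff u h y - η) hh
      (hLip u (hu.contDiff.differentiable two_ne_zero) y hZy)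
      (by simpa only [secondDiff_taylorRemainder] using hyη)
      (by rw [secondDiff_taylorRemainder]; linarith) z hzT
    rw [secondDiff_taylorRemainder] at this
    linarith
  have hnh : ‖n • h‖ ≤ T := norm_nsmul_le.trans (by rw [hT]; gcongr)
  have hlower := hZ y (closedBall_subset_closedBall (by linarith) hy) (n • h) (by linarith)
  have hupper := secondDiff_nsmul_le hspread
  have hnβ : A * ‖n • h‖ ^ β ≤ A * T ^ β := by gcongr
  linarith [(abs_le.1 hlower).1]

end AlmostConvexity

/-! ### Smallness of unit second differences -/

section NormedSpace

variable {V : Type*} [NormedAddCommGroup V] [NormedSpace ℝ V] {u : V → ℝ}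

lemma le_of_neg_le_secondDiff_self {ε r : ℝ} {v : V → ℝ} (hv : v 0 = 0)
    (hconv : ∀ y ∈ closedBall (0 : V) r, -ε ≤ secondDiff v y y) {x : V}
    (hx : x ∈ closedBall 0 r) (k : ℕ) :
    2 ^ k * v (((2 : ℝ) ^ k)⁻¹ • x) - (2 ^ k - 1) * ε ≤ v x := by
  induction k with
  | zero => simp
  | succ k ih =>
    have hmem : ((2 : ℝ) ^ (k + 1))⁻¹ • x ∈ closedBall 0 r := by
      rw [mem_closedBall_zero_iff] at hx ⊢
      exact (norm_two_pow_inv_smul_le _ x).trans hx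
    have hdouble := hconv _ hmem
    rw [secondDiff, sub_self, hv, ← two_pow_inv_smul_eq_add] at hdouble
    have := mul_le_mul_of_nonneg_left hdouble (by positivity : (0 : ℝ) ≤ 2 ^ k)
    rw [pow_succ] at this ⊢
    linarith

lemma exists_neg_le_taylorRemainder {A β η R : ℝ} (hβ : 1 < β) (hA : 0 ≤ A) (hη : 0 < η) :
    ∃ ε, 0 < ε ∧ ∀ u : V → ℝ, DifferentiableAt ℝ u 0 → ZygmundBound A β u 0 R →
      (∀ y ∈ closedBall (0 : V) R, -ε ≤ secondDiff u y y) →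
      ∀ x ∈ closedBall (0 : V) R, -η ≤ taylorRemainder u 0 x := by
  set q := 2 / (2 : ℝ) ^ β
  have hq1 : q < 1 := (div_lt_one (by positivity)).2 (two_lt_two_rpow hβ)
  have hlim : Tendsto (fun k : ℕ => A / (2 ^ β - 2) * (q ^ k * R ^ β)) atTop (𝓝 0) := by
    simpa using ((tendsto_pow_atTop_nhds_zero_of_lt_one (by positivity) hq1).mul_const
      (R ^ β)).const_mul (A / (2 ^ β - 2))
  obtain ⟨k, hk⟩ := (hlim.eventually_le_const (half_pos hη)).exists
  refine ⟨η / 2 / 2 ^ k, by positivity, fun u hu hZ hconv x hx => ?_⟩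
  have hxR := mem_closedBall_zero_iff.1 hx
  set y := ((2 : ℝ) ^ k)⁻¹ • x
  have hyx : ‖y‖ ≤ ‖x‖ := norm_two_pow_inv_smul_le k x
  have hnear : 2 ^ k * |taylorRemainder u 0 y| ≤ η / 2 := by
    have hC := sub_pos.2 (two_lt_two_rpow hβ)
    have hrem :=
      abs_taylorRemainder_add_le hβ hu (hZ.mono (r := ‖y‖) (by simpa using hyx.trans hxR))
    rw [zero_add] at hrem
    calc 2 ^ k * |taylorRemainder u 0 y| ≤ 2 ^ k * (A / (2 ^ β - 2) * ‖y‖ ^ β) := by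
          gcongr
      _ = A / (2 ^ β - 2) * (q ^ k * ‖x‖ ^ β) := by rw [← two_pow_mul_norm_rpow]; ring
      _ ≤ A / (2 ^ β - 2) * (q ^ k * R ^ β) := by gcongr
      _ ≤ η / 2 := hk
  have hsum := le_of_neg_le_secondDiff_self (taylorRemainder_self u 0)
    (by simpa only [secondDiff_taylorRemainder] using hconv) hx k
  have hε : (2 ^ k - 1) * (η / 2 / 2 ^ k) ≤ η / 2 := by
    rw [sub_mul, mul_div_cancel₀ _ (by positivity)]
    exact sub_le_self _ (by positivity)
  have := mul_le_mul_of_nonneg_left (neg_abs_le (taylorRemainder u 0 y))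
    (by positivity : (0 : ℝ) ≤ 2 ^ k)
  linarith

end NormedSpace

-- After subtracting the tangent plane at the origin, `u` vanishes there and is almost nonnegative
-- by almost convexity, so the strong minimum principle makes it small at distance `1`.
theorem exists_abs_secondDiff_lt_one (d : ℕ) {δ β A : ℝ} (hδ : 0 < δ) (hβ : 1 < β) (hβ2 : β < 2)
    (hA : 0 ≤ A) :
    ∃ K, 0 < K ∧ ∃ θ, 0 < θ ∧ ∀ u : E d → ℝ, NearConvexSolution δ θ u →
      ZygmundBound A β u 0 K → ∀ e, ‖e‖ ≤ 1 → |secondDiff u e 0| < 1 := by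
  obtain ⟨Λ, hLip⟩ := exists_lipschitzOnWith_taylorRemainder (V := E d) hβ hA two_pos
  obtain ⟨η₀, hη₀, hmin⟩ :=
    exists_strongMinPrinciple d hδ (by norm_num : (0 : ℝ) < 1 / 4) zero_le_one Λ
  set η := min η₀ (1 / 4)
  obtain ⟨ε, hε, hlow⟩ := exists_neg_le_taylorRemainder (V := E d) (R := 3) hβ hA
    (by positivity : 0 < η)
  obtain ⟨K, hK, θ, hθ, hconv⟩ :=
    exists_neg_le_secondDiff d hδ hβ hβ2 hA hε (by norm_num : (0 : ℝ) ≤ 3)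
  refine ⟨K + 4, by positivity, θ, hθ, fun u hu hZ e he => ?_⟩
  have hdiff := hu.contDiff.differentiable two_ne_zero
  set v := taylorRemainder u 0 with hv
  have hv0 : v 0 = 0 := taylorRemainder_self u 0
  have hvlow : ∀ x ∈ closedBall 0 3, -η ≤ v x := by
    refine hlow u (hdiff 0) (hZ.mono (by simp; linarith)) fun y hy => ?_
    have hyR := mem_closedBall_zero_iff.1 hy
    exact hconv u hu y (hZ.mono (by rw [dist_zero_right]; linarith)) y hyR
  have hvLip := hLip u hdiff 0 (hZ.mono (by simp; linarith))
  have hvup := hmin θ v (hu.taylorRemainder 0) 0 (-η)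
    (hvLip.mono (closedBall_subset_closedBall (by norm_num)))
    (fun x hx => hvlow x (closedBall_subset_closedBall (by norm_num) hx))
    (by rw [hv0]; linarith [min_le_left η₀ (1 / 4)])
  have hη4 : η ≤ 1 / 4 := min_le_right _ _
  have hbound {x : E d} (hx : ‖x‖ ≤ 1) : -(1 / 4) ≤ v x ∧ v x < 1 / 4 := by
    have hlo := hvlow x (mem_closedBall_zero_iff.2 (by linarith))
    have hhi := hvup x (mem_closedBall_zero_iff.2 hx)
    constructor <;> linarith [(by positivity : 0 < η)]
  have hpos := hbound he
  have hneg := hbound ((norm_neg e).trans_le he)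
  rw [← secondDiff_taylorRemainder u 0, ← hv, secondDiff, hv0, zero_add, zero_sub, abs_lt]
  constructor <;> linarith [hpos.1, hpos.2, hneg.1, hneg.2]

/-! ### Blow-up -/

section NormedSpace

variable {V : Type*} [NormedAddCommGroup V] {u : V → ℝ} {β N : ℝ} {x x₀ h h₀ : V}

/-- The second difference of `u` at `x` with step `h`, weighted by a power of the distance from `x`
to the sphere of radius `N`, measured in units of the step. For `h = 0` the quotient is the junk
value `0`, which is harmless since the second difference vanishes. -/
def weightedSecondDiff (β N : ℝ) (u : V → ℝ) (h x : V) : ℝ :=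
  |secondDiff u h x| * ((N - ‖x‖) / ‖h‖) ^ β

/-- The step `h₀` at `x₀` maximizes the weighted second difference, up to a factor `2`, among all
segments `[x - h, x + h]` inside the ball of radius `N`. -/
def IsAlmostMaximal (β N : ℝ) (u : V → ℝ) (h₀ x₀ : V) : Prop :=
  ∀ x h, ‖x‖ + ‖h‖ < N → weightedSecondDiff β N u h x ≤ 2 * weightedSecondDiff β N u h₀ x₀

lemma weightedSecondDiff_le (hβ : β ≤ 2) {C : ℝ} (hC : 0 ≤ C) (hxh : ‖x‖ + ‖h‖ ≤ N)
    (hsd : |secondDiff u h x| ≤ C * ‖h‖ ^ 2) : weightedSecondDiff β N u h x ≤ C * N ^ 2 := by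
  rcases eq_or_ne h 0 with rfl | hh
  · simp only [weightedSecondDiff, secondDiff_zero_left, abs_zero, zero_mul]
    positivity
  have hh := norm_pos_iff.2 hh
  have hratio : 1 ≤ (N - ‖x‖) / ‖h‖ := (one_le_div hh).2 (by linarith)
  have hD : 0 ≤ N - ‖x‖ := by linarith
  calc weightedSecondDiff β N u h x ≤ C * ‖h‖ ^ 2 * ((N - ‖x‖) / ‖h‖) ^ (2 : ℝ) := by
        rw [weightedSecondDiff]; gcongr
    _ = C * (N - ‖x‖) ^ 2 := by rw [Real.rpow_two]; field_simp
    _ ≤ C * N ^ 2 := by gcongr; exact sub_le_self _ (norm_nonneg x)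

lemma abs_secondDiff_mul_rpow_le_weightedSecondDiff (hβ : 0 ≤ β) {t : ℝ} (ht : 0 ≤ t)
    (hh : h ≠ 0) (htx : t * ‖h‖ ≤ N - ‖x‖) :
    |secondDiff u h x| * t ^ β ≤ weightedSecondDiff β N u h x := by
  rw [weightedSecondDiff]
  gcongr
  exact (le_div_iff₀ (norm_pos_iff.2 hh)).2 htx

lemma IsAlmostMaximal.mul_norm_lt (hmax : IsAlmostMaximal β N u h₀ x₀) {x₁ h₁ : V} {c L : ℝ}
    (hβ : 0 ≤ β) (hx₀ : ‖x₀‖ + ‖h₀‖ < N) (hh₀ : h₀ ≠ 0)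
    (hc : |secondDiff u h₀ x₀| ≤ c * N ^ β) (hx₁ : ‖x₁‖ + ‖h₁‖ < N)
    (hlarge : 2 * (c * N ^ β * L ^ β) < weightedSecondDiff β N u h₁ x₁) :
    L * ‖h₀‖ < N - ‖x₀‖ := by
  by_contra! hfar
  have hh₀ := norm_pos_iff.2 hh₀
  have hD : 0 ≤ N - ‖x₀‖ := by linarith
  have hupper : weightedSecondDiff β N u h₀ x₀ ≤ c * N ^ β * L ^ β :=
    mul_le_mul hc (Real.rpow_le_rpow (by positivity) ((div_le_iff₀ hh₀).2 hfar) hβ)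
      (by positivity) ((abs_nonneg _).trans hc)
  linarith [hmax x₁ h₁ hx₁]

variable [NormedSpace ℝ V]

lemma abs_secondDiff_le_of_lipschitzOnWith_fderiv {C : NNReal} {s : Set V} (hs : Convex ℝ s)
    (hu : Differentiable ℝ u) (hLip : LipschitzOnWith C (fderiv ℝ u) s) (hadd : x + h ∈ s)
    (hsub : x - h ∈ s) : |secondDiff u h x| ≤ C * ‖h‖ ^ 2 := by
  have hx : x ∈ s := by simpa only [midpoint_sub_add] using hs.midpoint_mem hsub hadd
  have hdiff (y : V) :
      HasFDerivAt (fun y => u (y + h) - u y) (fderiv ℝ u (y + h) - fderiv ℝ u y) y :=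
    ((hasFDerivAt_comp_add_right h).2 (hu (y + h)).hasFDerivAt).sub (hu y).hasFDerivAt
  have hconvex := hs.inter (hs.translate_preimage_left h)
  have hmean := hconvex.norm_image_sub_le_of_norm_hasFDerivWithin_le
    (fun y _ => (hdiff y).hasFDerivWithinAt)
    (fun y hy => by simpa using hLip.norm_sub_le hy.2 hy.1)
    (x := x - h) (y := x) ⟨hsub, by simpa using hx⟩ ⟨hx, hadd⟩
  rw [sub_add_cancel, sub_sub_cancel, Real.norm_eq_abs] at hmean
  rw [pow_two, ← mul_assoc]
  convert hmean using 2
  rw [secondDiff]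
  ring

lemma exists_abs_secondDiff_le_mul_sq [ProperSpace V] (hu : ContDiff ℝ 2 u) (N : ℝ) :
    ∃ C : NNReal, ∀ x h, ‖x‖ + ‖h‖ ≤ N → |secondDiff u h x| ≤ C * ‖h‖ ^ 2 := by
  have hderiv : ContDiff ℝ 1 (fderiv ℝ u) := hu.fderiv_right (by norm_num)
  obtain ⟨C, hC⟩ := hderiv.locallyLipschitz.locallyLipschitzOn.exists_lipschitzOnWith_of_compact
    (isCompact_closedBall (0 : V) N)
  refine ⟨C, fun x h hxh => abs_secondDiff_le_of_lipschitzOnWith_fderiv (convex_closedBall 0 N)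
    (hu.differentiable two_ne_zero) hC ?_ ?_⟩
  · exact mem_closedBall_zero_iff.2 ((norm_add_le x h).trans hxh)
  · exact mem_closedBall_zero_iff.2 ((norm_sub_le x h).trans hxh)

lemma exists_isAlmostMaximal [ProperSpace V] (hu : ContDiff ℝ 2 u) (hβ2 : β ≤ 2) {x₁ h₁ : V}
    (hx₁ : ‖x₁‖ + ‖h₁‖ < N) (hne : 0 < weightedSecondDiff β N u h₁ x₁) :
    ∃ x₀ h₀, ‖x₀‖ + ‖h₀‖ < N ∧ h₀ ≠ 0 ∧ secondDiff u h₀ x₀ ≠ 0 ∧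
      IsAlmostMaximal β N u h₀ x₀ := by
  obtain ⟨C, hC⟩ := exists_abs_secondDiff_le_mul_sq hu N
  set W := (fun p : V × V => weightedSecondDiff β N u p.2 p.1) '' {p | ‖p.1‖ + ‖p.2‖ < N}
  have hbdd : BddAbove W := by
    refine ⟨C * N ^ 2, ?_⟩
    rintro _ ⟨p, hp, rfl⟩
    exact weightedSecondDiff_le hβ2 C.2 (le_of_lt hp) (hC _ _ (le_of_lt hp))
  have hmem : weightedSecondDiff β N u h₁ x₁ ∈ W := ⟨(x₁, h₁), hx₁, rfl⟩
  have hsup : 0 < sSup W := hne.trans_le (le_csSup hbdd hmem)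
  obtain ⟨_, ⟨⟨x₀, h₀⟩, hx₀, rfl⟩, hhalf⟩ :=
    exists_lt_of_lt_csSup ⟨_, hmem⟩ (half_lt_self hsup)
  have hpos := (half_pos hsup).trans hhalf
  refine ⟨x₀, h₀, hx₀, ?_, ?_, fun x h hxh => ?_⟩
  · rintro rfl
    simp [weightedSecondDiff, secondDiff_zero_left] at hpos
  · intro hzero
    simp [weightedSecondDiff, hzero] at hpos
  · have : weightedSecondDiff β N u h x ≤ sSup W := le_csSup hbdd ⟨(x, h), hxh, rfl⟩
    linarith

lemma IsAlmostMaximal.abs_secondDiff_smul_le (hmax : IsAlmostMaximal β N u h₀ x₀) (hβ : 0 ≤ β)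
    (hx₀ : ‖x₀‖ < N) (hh₀ : h₀ ≠ 0) (hh : h ≠ 0) (hx : (N - ‖x₀‖) / 2 ≤ N - ‖x‖)
    (hxh : ‖x‖ + ‖h₀‖ * ‖h‖ < N) :
    |secondDiff u (‖h₀‖ • h) x| ≤ 2 * |secondDiff u h₀ x₀| * (2 * ‖h‖) ^ β := by
  have hr := norm_pos_iff.2 hh₀
  have := norm_pos_iff.2 hh
  have hD := sub_pos.2 hx₀
  have hnorm : ‖‖h₀‖ • h‖ = ‖h₀‖ * ‖h‖ := norm_smul_of_nonneg hr.le h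
  have hlow := abs_secondDiff_mul_rpow_le_weightedSecondDiff (u := u) (N := N) (x := x)
    (h := ‖h₀‖ • h) hβ (t := (N - ‖x₀‖) / ‖h₀‖ / (2 * ‖h‖)) (by positivity)
    (smul_ne_zero hr.ne' hh) (by rw [hnorm]; convert hx using 1; field_simp)
  have hup := hlow.trans (hmax x _ (by rwa [hnorm]))
  rw [Real.div_rpow (by positivity) (by positivity), weightedSecondDiff, ← mul_div_assoc,
    div_le_iff₀ (by positivity)] at hup
  refine le_of_mul_le_mul_right (hup.trans_eq ?_) (by positivity : 0 < ((N - ‖x₀‖) / ‖h₀‖) ^ β)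
  ring

lemma IsAlmostMaximal.zygmundBound (hmax : IsAlmostMaximal β N u h₀ x₀) (hβ : 0 ≤ β)
    (hβ2 : β ≤ 2) (hh₀ : h₀ ≠ 0) (hne : secondDiff u h₀ x₀ ≠ 0) {K : ℝ} (hK : 0 < K)
    (hfar : 4 * K * ‖h₀‖ < N - ‖x₀‖) :
    ZygmundBound 8 β (fun y => |secondDiff u h₀ x₀|⁻¹ * u (x₀ + ‖h₀‖ • y)) 0 K := by
  intro y hy h hh
  have hr := norm_pos_iff.2 hh₀
  rcases eq_or_ne h 0 with rfl | hh0
  · rw [secondDiff_zero_left, abs_zero]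
    positivity
  have hshift : ‖x₀ + ‖h₀‖ • y‖ ≤ ‖x₀‖ + ‖h₀‖ * K := by
    refine (norm_add_le _ _).trans ?_
    rw [norm_smul_of_nonneg hr.le]
    gcongr
    exact mem_closedBall_zero_iff.1 hy
  have hstep : ‖h₀‖ * ‖h‖ ≤ ‖h₀‖ * K := by gcongr
  have hKr : 0 < K * ‖h₀‖ := by positivity
  have hbound := hmax.abs_secondDiff_smul_le hβ (x := x₀ + ‖h₀‖ • y) (by linarith) hh₀ hh0
    (by linarith) (by linarith)
  have htwo : (2 : ℝ) ^ β ≤ 4 := by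
    simpa only [Real.rpow_two, show (2 : ℝ) ^ 2 = 4 by norm_num] using
      Real.rpow_le_rpow_of_exponent_le one_le_two hβ2
  rw [secondDiff_rescale, abs_mul, abs_of_nonneg (by positivity), inv_mul_le_iff₀ (abs_pos.2 hne)]
  calc |secondDiff u (‖h₀‖ • h) (x₀ + ‖h₀‖ • y)|
      ≤ 2 * |secondDiff u h₀ x₀| * (2 * ‖h‖) ^ β := hbound
    _ = 2 * |secondDiff u h₀ x₀| * (2 ^ β * ‖h‖ ^ β) := by
        rw [Real.mul_rpow zero_le_two (norm_nonneg h)]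
    _ ≤ 2 * |secondDiff u h₀ x₀| * (4 * ‖h‖ ^ β) := by gcongr
    _ = |secondDiff u h₀ x₀| * (8 * ‖h‖ ^ β) := by ring

lemma exists_isAlmostMaximal_mul_norm_lt [ProperSpace V] (hu : ContDiff ℝ 2 u) (hβ : 0 < β)
    (hβ2 : β ≤ 2) {L : ℝ} (hL : 0 < L)
    (hgrowth : ∀ c, 0 < c → ∃ᶠ R in atTop, ∀ x h : V, ‖x‖ + ‖h‖ < R →
      |secondDiff u h x| ≤ c * R ^ β) {x₁ h₁ : V} (hne : secondDiff u h₁ x₁ ≠ 0) :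
    ∃ N x₀ h₀, h₀ ≠ 0 ∧ secondDiff u h₀ x₀ ≠ 0 ∧ IsAlmostMaximal β N u h₀ x₀ ∧
      L * ‖h₀‖ < N - ‖x₀‖ := by
  have hh₁ : h₁ ≠ 0 := by
    rintro rfl
    exact hne (secondDiff_zero_left u x₁)
  have hh₁' := norm_pos_iff.2 hh₁
  have := abs_pos.2 hne
  set c := |secondDiff u h₁ x₁| / (4 * (2 * ‖h₁‖ * L) ^ β) with hc
  obtain ⟨N, hN, hNx, hNh⟩ := ((hgrowth c (by positivity)).and_eventually
    ((eventually_gt_atTop (2 * ‖x₁‖)).and (eventually_gt_atTop (‖x₁‖ + ‖h₁‖)))).exists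
  have hN0 : 0 < N := by linarith [norm_nonneg x₁]
  have hlow := abs_secondDiff_mul_rpow_le_weightedSecondDiff (u := u) (N := N) (x := x₁) hβ.le
    (t := N / (2 * ‖h₁‖)) (by positivity) hh₁
    (by rw [div_mul_eq_mul_div, mul_div_mul_right _ _ hh₁'.ne']; linarith)
  have hlarge : 2 * (c * N ^ β * L ^ β) < weightedSecondDiff β N u h₁ x₁ := by
    refine lt_of_lt_of_le ?_ hlow
    have : |secondDiff u h₁ x₁| * (N / (2 * ‖h₁‖)) ^ β = 4 * (c * N ^ β * L ^ β) := by
      rw [hc, Real.div_rpow hN0.le (by positivity), Real.mul_rpow (by positivity) hL.le]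
      field_simp
    rw [this]
    have : 0 < c * N ^ β * L ^ β := by positivity
    linarith
  obtain ⟨x₀, h₀, hx₀, hh₀, hne₀, hmax⟩ := exists_isAlmostMaximal hu hβ2 hNh
    (lt_of_le_of_lt (by positivity) hlarge)
  exact ⟨N, x₀, h₀, hh₀, hne₀, hmax,
    hmax.mul_norm_lt hβ.le hx₀ hh₀ (hN x₀ h₀ hx₀) hNh hlarge⟩

end NormedSpace

-- Were some second difference nonzero, rescaling around an almost maximal one would give a solution
-- with a unit second difference at the origin and a Zygmund bound on a large ball.
theorem exists_forall_secondDiff_eq_zero (d : ℕ) {δ β : ℝ} (hδ : 0 < δ) (hβ : 1 < β)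
    (hβ2 : β < 2) :
    ∃ θ, 0 < θ ∧ ∀ u : E d → ℝ, NearConvexSolution δ θ u →
      (∀ c, 0 < c → ∃ᶠ R in atTop, ∀ x h : E d, ‖x‖ + ‖h‖ < R →
        |secondDiff u h x| ≤ c * R ^ β) →
      ∀ h x, secondDiff u h x = 0 := by
  obtain ⟨K, hK, θ, hθ, hsmall⟩ :=
    exists_abs_secondDiff_lt_one d hδ hβ hβ2 (by norm_num : (0 : ℝ) ≤ 8)
  refine ⟨θ, hθ, fun u hu hgrowth h₁ x₁ => ?_⟩
  by_contra hne
  obtain ⟨N, x₀, h₀, hh₀, hne₀, hmax, hfar⟩ := exists_isAlmostMaximal_mul_norm_lt hu.contDiff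
    (by linarith) hβ2.le (by positivity : 0 < 4 * K) hgrowth hne
  have hr := norm_pos_iff.2 hh₀
  have hlt := hsmall _ (hu.rescale (inv_pos.2 (abs_pos.2 hne₀)) hr.ne' x₀)
    (hmax.zygmundBound (by linarith) hβ2.le hh₀ hne₀ hK hfar) (‖h₀‖⁻¹ • h₀)
    (by rw [norm_smul_of_nonneg (by positivity), inv_mul_cancel₀ hr.ne'])
  rw [secondDiff_rescale, smul_inv_smul₀ hr.ne', smul_zero, add_zero, abs_mul,
    abs_of_nonneg (by positivity), inv_mul_cancel₀ (abs_ne_zero.2 hne₀)] at hlt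
  exact lt_irrefl _ hlt

/-! ### Deviation from affine functions -/

section AffineDeviation

lemma abs_le_iSup_ball_abs {X : Type*} [PseudoMetricSpace X] [ProperSpace X] {f : X → ℝ}
    (hf : Continuous f) {c x : X} {R : ℝ} (hx : x ∈ ball c R) :
    |f x| ≤ ⨆ y ∈ ball c R, |f y| := by
  obtain ⟨B, hB⟩ := (isCompact_closedBall c R).exists_bound_of_continuousOn hf.continuousOn
  refine le_ciSup₂ (f := fun y (_ : y ∈ ball c R) => |f y|) ⟨B, ?_⟩ x hx
  simp only [mem_upperBounds, mem_iUnion, mem_range]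
  rintro _ ⟨y, hy, rfl⟩
  exact hB y (ball_subset_closedBall hy)

lemma abs_secondDiff_le_four_mul {V : Type*} [SeminormedAddCommGroup V] {u : V → ℝ} {B R : ℝ}
    {h x : V} (hB : ∀ y ∈ ball (0 : V) R, |u y| ≤ B) (hxh : ‖x‖ + ‖h‖ < R) :
    |secondDiff u h x| ≤ 4 * B := by
  have hadd := abs_le.1 (hB (x + h) (mem_ball_zero_iff.2 ((norm_add_le x h).trans_lt hxh)))
  have hsub := abs_le.1 (hB (x - h) (mem_ball_zero_iff.2 ((norm_sub_le x h).trans_lt hxh)))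
  have hx := abs_le.1 (hB x (mem_ball_zero_iff.2 (by linarith [norm_nonneg h])))
  rw [secondDiff, abs_le]
  constructor <;> linarith [hadd.1, hadd.2, hsub.1, hsub.2, hx.1, hx.2]

variable {V : Type*} [NormedAddCommGroup V] [InnerProductSpace ℝ V] {u : V → ℝ}

/-- The uniform distance from `u` to the affine functions on the open ball of radius `R` about the
origin. -/
def affineDeviation (u : V → ℝ) (R : ℝ) : ℝ :=
  ⨅ (a : ℝ) (v : V), ⨆ x ∈ ball (0 : V) R, |u x - (a + ⟪v, x⟫)|

lemma secondDiff_sub_affine (u : V → ℝ) (a : ℝ) (v : V) :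
    secondDiff (fun x => u x - (a + ⟪v, x⟫)) = secondDiff u := by
  ext h x
  simp only [secondDiff, inner_add_right, inner_sub_right]
  ring

variable [ProperSpace V]

lemma abs_secondDiff_le_four_mul_affineDeviation (hu : Continuous u) {R : ℝ} {h x : V}
    (hxh : ‖x‖ + ‖h‖ < R) : |secondDiff u h x| ≤ 4 * affineDeviation u R := by
  rw [← div_le_iff₀' four_pos]
  refine le_ciInf fun a => le_ciInf fun v => (div_le_iff₀' four_pos).2 ?_
  rw [← secondDiff_sub_affine u a v]
  have hcont : Continuous fun y => u y - (a + ⟪v, y⟫) := by fun_prop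
  exact abs_secondDiff_le_four_mul (fun y hy => abs_le_iSup_ball_abs hcont hy) hxh

lemma frequently_abs_secondDiff_le (hu : Continuous u) {α β : ℝ} (hαβ : 2 - α ≤ β)
    (hlim : MapClusterPt 0 atTop fun R => R ^ (α - 2) * affineDeviation u R) {c : ℝ}
    (hc : 0 < c) :
    ∃ᶠ R in atTop, ∀ x h : V, ‖x‖ + ‖h‖ < R → |secondDiff u h x| ≤ c * R ^ β := by
  refine ((hlim.frequently (gt_mem_nhds (by positivity : 0 < c / 4))).and_eventually
    (eventually_ge_atTop 1)).mono fun R ⟨hdev, hR⟩ x h hxh => ?_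
  have hR0 : 0 < R := zero_lt_one.trans_le hR
  have hcancel : R ^ (2 - α) * (R ^ (α - 2) * affineDeviation u R) = affineDeviation u R := by
    rw [← mul_assoc, ← Real.rpow_add hR0, sub_add_sub_cancel, sub_self, Real.rpow_zero, one_mul]
  calc |secondDiff u h x| ≤ 4 * affineDeviation u R :=
        abs_secondDiff_le_four_mul_affineDeviation hu hxh
    _ = 4 * (R ^ (2 - α) * (R ^ (α - 2) * affineDeviation u R)) := by rw [hcancel]
    _ ≤ 4 * (R ^ (2 - α) * (c / 4)) := by gcongr
    _ ≤ 4 * (R ^ β * (c / 4)) := by gcongr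
    _ = c * R ^ β := by ring

lemma exists_eq_add_inner_of_secondDiff_eq_zero (hu : DifferentiableAt ℝ u 0)
    (hzero : ∀ h x, secondDiff u h x = 0) : ∃ (a : ℝ) (v : V), ∀ x, u x = a + ⟪v, x⟫ := by
  refine ⟨u 0, (InnerProductSpace.toDual ℝ V).symm (fderiv ℝ u 0), fun x => ?_⟩
  rw [InnerProductSpace.toDual_symm_apply]
  exact exists_eq_add_of_secondDiff_eq_zero hu hzero x

end AffineDeviation

theorem stmt_5_general (d : ℕ) {δ α : ℝ} (hδ : 0 < δ) (hα : 0 < α) :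
    ∃ θ : ℝ, 0 < θ ∧
      ∀ (F Fb : Matrix (Fin d) (Fin d) ℝ → ℝ) (u : E d → ℝ),
        Elliptic δ F → F 0 = 0 →
        ConvexOn ℝ {m | m.IsSymm} Fb → Elliptic δ Fb → Fb 0 = 0 →
        (∀ m : Matrix (Fin d) (Fin d) ℝ, m.IsSymm → frob m = 1 →
          ∀ τ : ℝ, 0 < τ → τ⁻¹ * |F (τ • m) - Fb (τ • m)| ≤ θ) →
        ContDiff ℝ 2 u →
        (∀ x : E d, F (hess u x) = 0) →
        MapClusterPt 0 atTop (fun R : ℝ => R ^ (α - 2) * affineDeviation u R) →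
        ∃ (a : ℝ) (v : E d), ∀ x : E d, u x = a + ⟪v, x⟫ := by
  have hmin : 0 < min α (1 / 2) := by positivity
  obtain ⟨θ, hθ, hzero⟩ := exists_forall_secondDiff_eq_zero d (β := 2 - min α (1 / 2)) hδ
    (by linarith [min_le_right α (1 / 2)]) (by linarith)
  refine ⟨θ, hθ, fun F Fb u hF hF0 hconv hFb hFb0 hclose hu hsol hlim => ?_⟩
  have hsolution : NearConvexSolution δ θ u :=
    ⟨hu, F, .of_sup_le hF hF0 hconv hFb hFb0 hclose, hsol⟩
  exact exists_eq_add_inner_of_secondDiff_eq_zero (hu.differentiable two_ne_zero 0)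
    (hzero u hsolution fun c hc => frequently_abs_secondDiff_le hu.continuous
      (by linarith [min_le_left α (1 / 2)]) hlim hc)

/-- Corollary 4.2 of the paper: Liouville property for `x`-independent `F`. -/
theorem stmt_5 (d : ℕ) (hd : 1 ≤ d) (δ : ℝ) (hδ : δ ∈ Set.Ioc (0 : ℝ) 1) :
    ∃ d₀ : ℝ, d₀ ∈ Set.Ioo ((d : ℝ) / 2) (d : ℝ) ∧
      ∀ p : ℝ, d₀ < p →
        ∀ α : ℝ, 0 < α →
          ∃ θ : ℝ, 0 < θ ∧
            ∀ (F Fb : Matrix (Fin d) (Fin d) ℝ → ℝ) (u : E d → ℝ),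
              Elliptic δ F → F 0 = 0 →
              ConvexOn ℝ Set.univ Fb → Elliptic δ Fb → Fb 0 = 0 →
              (∀ m : Matrix (Fin d) (Fin d) ℝ, m.IsSymm → frob m = 1 →
                ∀ τ : ℝ, 0 < τ → τ⁻¹ * |F (τ • m) - Fb (τ • m)| ≤ θ) →
              ContDiff ℝ 2 u →
              (∀ x : E d, F (hess u x) = 0) →
              Filter.Tendsto
                (fun R : ℝ => R ^ (α - 2) *
                  ⨅ (a : ℝ) (v : E d), ⨆ x ∈ ball (0 : E d) R, |u x - (a + ⟪v, x⟫)|)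
                Filter.atTop (nhds 0) →
              ∃ (a : ℝ) (v : E d), ∀ x : E d, u x = a + ⟪v, x⟫ := by
  have hd0 : (0 : ℝ) < d := by exact_mod_cast hd
  refine ⟨3 / 4 * d, ⟨by linarith, by linarith⟩, fun _ _ α hα => ?_⟩
  obtain ⟨θ, hθ, haffine⟩ := stmt_5_general d hδ.1 hα
  refine ⟨θ, hθ, fun F Fb u hF hF0 hconv hFb hFb0 hclose hu hsol hlim => ?_⟩
  have hsymm : Convex ℝ {m : Matrix (Fin d) (Fin d) ℝ | m.IsSymm} := by
    intro m hm n hn s t _ _ _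
    exact (hm.smul s).add (hn.smul t)
  exact haffine F Fb u hF hF0 (hconv.subset (subset_univ _) hsymm) hFb hFb0 hclose hu hsol
    hlim.mapClusterPt
end
end

section
/- Let d ≥ 1 be an integer, p ∈ (1,∞), 0 < μ ≤ d/p, R ∈ (0,∞), and x₀ ∈ B_R. There is a constant N = N(d,p,μ) such that for every function u that is twice continuously differentiable on B̄_R, every ε ∈ (0,1], every r ≤ 2R, and every constant c ∈ ℝ: r^μ #‖1_{B_R} Du‖_{L_p(B_r(x₀))} ≤ N ε R · sup_{r ≤ s ≤ 2R} s^μ #‖1_{B_R} D²u‖_{L_p(B_s(x₀))} + N ε^{−1} R^{−1} · sup_{r ≤ s ≤ 2R} s^μ #‖1_{B_R}(u − c)‖_{L_p(B_s(x₀))}. -/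
open MeasureTheory Metric Set Filter
open scoped ENNReal RealInnerProductSpace

noncomputable section

/-
Let `x ∈ B_r(x₀) ∩ B_R` and `r ≤ s ≤ 2R`. The set `B_s(x₀) ∩ B_R` contains a ball of radius
`s / 16` on which `|Du(x)(a - x)| ≥ s |Du(x)| / 32`. Expanding `u` to second order along the first
fraction `τ` of the segment from `x` to such an `a` bounds `τ s |Du(x)|` by the values of `|u - c|`
at the two ends of that piece and by `(τ s)²` times the average of `|D²u|` along it. Averaging over
`a ∈ B_s(x₀)` and taking the `L_p` mean over `x ∈ B_r(x₀)` costs only dimensional constants: the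
point at time `t` has a law of density at most `2^d` relative to the uniform law on `B_σ(x₀)`,
where `σ = (1 - t) r + t s` lies in `[r, 2R]`, and `r^μ ≤ σ^μ`. The estimate is the case
`s = max r (ε R)`, `τ = ε R / s`.
-/

open AffineMap (homothety homothety_apply lineMap)
open Module (finrank)
open ProbabilityTheory (ae_cond_mem)
open scoped ProbabilityTheory

section Averages

variable {α β : Type*} [MeasurableSpace α] [MeasurableSpace β] {p : ℝ}

lemma rpow_lintegral_le_lintegral_rpow {ν : Measure α} [IsProbabilityMeasure ν] (hp : 1 ≤ p)
    {f : α → ℝ≥0∞} (hf : AEMeasurable f ν) : (∫⁻ a, f a ∂ν) ^ p ≤ ∫⁻ a, f a ^ p ∂ν := by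
  have hp0 : 0 < p := zero_lt_one.trans_le hp
  calc (∫⁻ a, f a ∂ν) ^ p = eLpNorm' f 1 ν ^ p := by simp [eLpNorm']
    _ ≤ eLpNorm' f p ν ^ p := by
      gcongr
      exact eLpNorm'_le_eLpNorm'_of_exponent_le zero_lt_one hp ν hf.aestronglyMeasurable
    _ = ∫⁻ a, f a ^ p ∂ν := (lintegral_rpow_enorm_eq_rpow_eLpNorm' hp0).symm

lemma eLpNorm'_lintegral_le {P : Measure α} {ν : Measure β} [SFinite P] [IsProbabilityMeasure ν]
    (hp : 1 ≤ p) {F : α → β → ℝ≥0∞} (hF : Measurable (Function.uncurry F)) {C : ℝ≥0∞}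
    (hC : ∀ᵐ y ∂ν, eLpNorm' (F · y) p P ≤ C) :
    eLpNorm' (fun x => ∫⁻ y, F x y ∂ν) p P ≤ C := by
  have hp0 : 0 < p := zero_lt_one.trans_le hp
  rw [← ENNReal.rpow_le_rpow_iff hp0]
  calc eLpNorm' (fun x => ∫⁻ y, F x y ∂ν) p P ^ p = ∫⁻ x, (∫⁻ y, F x y ∂ν) ^ p ∂P :=
        (lintegral_rpow_enorm_eq_rpow_eLpNorm' hp0).symm
    _ ≤ ∫⁻ x, ∫⁻ y, F x y ^ p ∂ν ∂P :=
      lintegral_mono fun x => rpow_lintegral_le_lintegral_rpow hp hF.of_uncurry_left.aemeasurable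
    _ = ∫⁻ y, ∫⁻ x, F x y ^ p ∂P ∂ν := lintegral_lintegral_swap (hF.pow_const p).aemeasurable
    _ = ∫⁻ y, eLpNorm' (F · y) p P ^ p ∂ν := by
      simp only [← lintegral_rpow_enorm_eq_rpow_eLpNorm' hp0, enorm_eq_self]
    _ ≤ ∫⁻ _, C ^ p ∂ν := lintegral_mono_ae <| hC.mono fun y hy => by gcongr
    _ = C ^ p := by simp

lemma eLpNorm'_ennreal_const_mul {P : Measure α} (hp : 0 < p) {c : ℝ≥0∞} (hc : c ≠ ∞)
    (f : α → ℝ≥0∞) : eLpNorm' (fun x => c * f x) p P = c * eLpNorm' f p P := by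
  simp only [eLpNorm', enorm_eq_self, ENNReal.mul_rpow_of_nonneg _ _ hp.le]
  rw [lintegral_const_mul' _ _ (ENNReal.rpow_ne_top_of_nonneg hp.le hc),
    ENNReal.mul_rpow_of_nonneg _ _ (by positivity), one_div, ENNReal.rpow_rpow_inv hp.ne']

lemma const_mul_eLpNorm'_le_of_forall_enorm_le {X Y : Type*} [NormedAddCommGroup X]
    [NormedAddCommGroup Y] {P : Measure α} (hp : 1 ≤ p) {b c k : ℝ≥0∞} (hb : b ≠ ∞) (hc : c ≠ ∞)
    (hk : k ≠ ∞) {g : α → X} {f : α → Y} {A B : α → ℝ≥0∞} (hA : Measurable A)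
    (hf : Measurable fun x => ‖f x‖ₑ) (hB : Measurable B)
    (h : ∀ᵐ x ∂P, b * ‖g x‖ₑ ≤ c * (A x + ‖f x‖ₑ + k * B x)) :
    b * eLpNorm' g p P ≤ c * (eLpNorm' A p P + eLpNorm' f p P + k * eLpNorm' B p P) := by
  have hp0 : 0 < p := zero_lt_one.trans_le hp
  calc b * eLpNorm' g p P = eLpNorm' (fun x => b * ‖g x‖ₑ) p P := by
        rw [eLpNorm'_ennreal_const_mul hp0 hb, eLpNorm'_enorm]
    _ ≤ eLpNorm' (fun x => c * (A x + ‖f x‖ₑ + k * B x)) p P :=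
        eLpNorm'_mono_enorm_ae hp0.le h
    _ = c * eLpNorm' (A + (‖f ·‖ₑ) + (k * B ·)) p P := eLpNorm'_ennreal_const_mul hp0 hc _
    _ ≤ c * (eLpNorm' A p P + eLpNorm' (‖f ·‖ₑ) p P + eLpNorm' (k * B ·) p P) := by
        gcongr
        exact (eLpNorm'_add_le (hA.add hf).aestronglyMeasurable
          (hB.const_mul k).aestronglyMeasurable hp).trans
          (by gcongr; exact eLpNorm'_add_le hA.aestronglyMeasurable hf.aestronglyMeasurable hp)
    _ = c * (eLpNorm' A p P + eLpNorm' f p P + k * eLpNorm' B p P) := by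
        rw [eLpNorm'_ennreal_const_mul hp0 hk, eLpNorm'_enorm]

lemma eLpNorm'_indicator_norm {Y : Type*} [NormedAddCommGroup Y] {P : Measure α} (s : Set α)
    (f : α → Y) : eLpNorm' (s.indicator (‖f ·‖)) p P = eLpNorm' (s.indicator f) p P :=
  eLpNorm'_congr_norm_ae <| .of_forall fun x => by
    rw [← norm_indicator_eq_indicator_norm, norm_norm]

lemma cond_le_smul_cond {μ : Measure α} {s t : Set α} {C : ℝ≥0∞} (hst : s ⊆ t)
    (ht : μ t ≠ ∞) (hμ : μ t ≤ C * μ s) : μ[|s] ≤ C • μ[|t] := by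
  by_cases hs : μ s = 0
  · simp [ProbabilityTheory.cond_eq_zero_of_meas_eq_zero hs, Measure.zero_le]
  have ht0 : μ t ≠ 0 := fun h => hs (measure_mono_null hst h)
  rw [ProbabilityTheory.cond, ProbabilityTheory.cond, smul_smul]
  gcongr
  rw [← div_eq_mul_inv, ENNReal.le_div_iff_mul_le (.inl ht0) (.inl ht), mul_comm]
  exact ENNReal.div_le_of_le_mul hμ

lemma setLIntegral_eq_measure_mul_lintegral_cond {μ : Measure α} {s : Set α} (hs0 : μ s ≠ 0)
    (hs : μ s ≠ ∞) (f : α → ℝ≥0∞) : ∫⁻ x in s, f x ∂μ = μ s * ∫⁻ x, f x ∂μ[|s] := by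
  rw [ProbabilityTheory.cond, lintegral_smul_measure, smul_eq_mul,
    ENNReal.mul_inv_cancel_left hs0 hs]

lemma measurable_enorm_indicator {X Y : Type*} [TopologicalSpace X] [MeasurableSpace X]
    [OpensMeasurableSpace X] [NormedAddCommGroup Y] {s : Set X} (hs : MeasurableSet s)
    {f : X → Y} (hf : ContinuousOn f s) : Measurable fun x => ‖s.indicator f x‖ₑ := by
  classical
  simp only [enorm_indicator_eq_indicator_enorm]
  rw [← piecewise_eq_indicator]
  exact hf.enorm.measurable_piecewise continuousOn_const hs

end Averages

section Balls

variable {V : Type*} [NormedAddCommGroup V] [NormedSpace ℝ V]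

lemma image_homothety_ball (a x : V) {k : ℝ} (hk : 0 < k) (r : ℝ) :
    homothety a k '' ball x r = ball (homothety a k x) (k * r) := by
  have hdist (y z : V) :
      dist (homothety a k y) (homothety a k z) = k * dist y z := by
    simp [homothety_apply, dist_eq_norm, ← smul_sub, norm_smul, abs_of_pos hk]
  refine (image_subset_iff.2 fun y hy => ?_).antisymm fun y hy => ?_
  · rw [mem_preimage, mem_ball, hdist]
    exact mul_lt_mul_of_pos_left hy hk
  · have hy' : homothety a k (homothety a k⁻¹ y) = y := by
      simp [homothety_apply, hk.ne']
    refine ⟨_, ?_, hy'⟩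
    rwa [← hy', mem_ball, hdist, mul_lt_mul_iff_right₀ hk] at hy

variable [FiniteDimensional ℝ V] [MeasurableSpace V] [BorelSpace V] (μ : Measure V)
  [μ.IsAddHaarMeasure]

lemma map_homothety_cond (a : V) {k : ℝ} (hk : k ≠ 0) (s : Set V) :
    (μ[|s]).map (homothety a k) = μ[|homothety a k '' s] := by
  have hmeas : Measurable (homothety a k) :=
    (AffineMap.homothety_continuous a k).measurable
  set D := ENNReal.ofReal |k ^ finrank ℝ V|
  have hD : D ≠ 0 := by simp [D, hk]
  ext t ht
  rw [Measure.map_apply hmeas ht, ProbabilityTheory.cond_apply' (hmeas ht),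
    ProbabilityTheory.cond_apply' ht, ← image_inter_preimage, Measure.addHaar_image_homothety,
    Measure.addHaar_image_homothety]
  rw [ENNReal.mul_inv (.inl hD) (.inl ENNReal.ofReal_ne_top), mul_mul_mul_comm,
    ENNReal.inv_mul_cancel hD ENNReal.ofReal_ne_top, one_mul]

lemma map_lineMap_cond_ball (x₀ a : V) {t r : ℝ} (ht : t < 1) :
    (μ[|ball x₀ r]).map (lineMap · a t) =
      μ[|ball (lineMap x₀ a t) ((1 - t) * r)] := by
  have hline (x : V) : lineMap x a t = homothety a (1 - t) x := by
    rw [AffineMap.homothety_eq_lineMap, AffineMap.lineMap_apply_one_sub]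
  simp only [hline]
  rw [map_homothety_cond μ a (sub_pos.2 ht).ne', image_homothety_ball a x₀ (sub_pos.2 ht)]

lemma cond_ball_le_smul_cond_ball {x y : V} {ρ r k : ℝ} (hk : 0 < k)
    (hr : r ≤ k * ρ) (hsub : ball y ρ ⊆ ball x r) :
    μ[|ball y ρ] ≤ ENNReal.ofReal k ^ finrank ℝ V • μ[|ball x r] := by
  refine cond_le_smul_cond hsub measure_ball_lt_top.ne ?_
  calc μ (ball x r) ≤ μ (ball x (k * ρ)) := measure_mono (ball_subset_ball hr)
    _ = ENNReal.ofReal k ^ finrank ℝ V * μ (ball y ρ) := by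
      rw [Measure.addHaar_ball_mul_of_pos μ x hk, ENNReal.ofReal_pow hk.le,
        Measure.addHaar_ball_center μ y]

end Balls

section MorreySupremum

variable {V F G : Type*} [NormedAddCommGroup V] [MeasurableSpace V] [NormedAddCommGroup F]
  [NormedAddCommGroup G]

/-- The Morrey-type quantity `sup_{s ∈ I} s^θ (⨍_{B_s(x₀)} ‖f‖^p)^{1/p}`, the supremum being
restricted to a set `I` of radii and to a single centre. The normalized `L_p` norm is encoded as
the `L_p` norm for the uniform probability measure on the ball. -/
def morreySupOn (μ : Measure V) (p θ : ℝ) (x₀ : V) (I : Set ℝ) (f : V → F) : ℝ≥0∞ :=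
  ⨆ s ∈ I, ENNReal.ofReal (s ^ θ) * eLpNorm' f p μ[|ball x₀ s]

lemma morreySupOn_mono {μ : Measure V} {p θ : ℝ} (hp : 0 ≤ p) {x₀ : V} {I : Set ℝ} {f : V → F}
    {g : V → G} (h : ∀ x, ‖f x‖ ≤ ‖g x‖) :
    morreySupOn μ p θ x₀ I f ≤ morreySupOn μ p θ x₀ I g := by
  unfold morreySupOn
  gcongr
  exact eLpNorm'_mono_ae hp (.of_forall h)

end MorreySupremum

section SegmentAverages

variable {V F : Type*} [NormedAddCommGroup V] [NormedSpace ℝ V] [MeasurableSpace V]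
  [NormedAddCommGroup F]

/-- The average `⨍_B ‖f((1 - t)x + ta)‖ da` of `‖f‖` over the points at time `t` on the segments
issuing from `x` and ending in `B`. -/
def lineMapAverage (μ : Measure V) (B : Set V) (t : ℝ) (f : V → F) (x : V) : ℝ≥0∞ :=
  ∫⁻ a, ‖f (lineMap x a t)‖ₑ ∂μ[|B]

lemma measurable_lineMapAverage [FiniteDimensional ℝ V] [BorelSpace V] (μ : Measure V) {f : V → F}
    (hf : Measurable fun x => ‖f x‖ₑ) (B : Set V) :
    Measurable (Function.uncurry fun x t => lineMapAverage μ B t f x) := by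
  have hcont : Continuous fun q : (V × ℝ) × V => lineMap q.1.1 q.2 q.1.2 := by fun_prop
  exact (hf.comp hcont.measurable).lintegral_prod_right'

variable [FiniteDimensional ℝ V] (μ : Measure V) [μ.IsAddHaarMeasure] {p r s t : ℝ}

lemma isProbabilityMeasure_cond_ball (x : V) (hr : 0 < r) : IsProbabilityMeasure μ[|ball x r] :=
  ProbabilityTheory.cond_isProbabilityMeasure_of_finite (measure_ball_pos μ x hr).ne'
    measure_ball_lt_top.ne

variable [BorelSpace V]

lemma lintegral_lineMap_cond_ball_le {x₀ a : V} (ha : a ∈ ball x₀ s) (ht0 : 0 ≤ t) (ht1 : t < 1)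
    (hts : t * s ≤ (1 - t) * r) {G : V → ℝ≥0∞} (hG : Measurable G) :
    ∫⁻ x, G (lineMap x a t) ∂μ[|ball x₀ r] ≤
      2 ^ finrank ℝ V * ∫⁻ y, G y ∂μ[|ball x₀ ((1 - t) * r + t * s)] := by
  have hsub : ball (lineMap x₀ a t) ((1 - t) * r) ⊆
      ball x₀ ((1 - t) * r + t * s) := by
    refine ball_subset_ball' (add_le_add_right ?_ _)
    rw [dist_lineMap_left, Real.norm_of_nonneg ht0, dist_comm]
    gcongr
    exact (mem_ball.1 ha).le
  have hcont : Continuous fun x : V => lineMap x a t := by fun_prop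
  calc ∫⁻ x, G (lineMap x a t) ∂μ[|ball x₀ r]
      = ∫⁻ y, G y ∂μ[|ball (lineMap x₀ a t) ((1 - t) * r)] := by
        rw [← map_lineMap_cond_ball μ x₀ a ht1, lintegral_map hG hcont.measurable]
    _ ≤ ∫⁻ y, G y ∂(ENNReal.ofReal 2 ^ finrank ℝ V •
          μ[|ball x₀ ((1 - t) * r + t * s)]) :=
        lintegral_mono' (cond_ball_le_smul_cond_ball μ two_pos (by linarith) hsub) le_rfl
    _ = _ := by rw [lintegral_smul_measure, smul_eq_mul, ENNReal.ofReal_ofNat]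

-- Both endpoints are averaged, so one may integrate first over whichever endpoint carries the
-- larger scale: with the other one fixed, the segment point fills at least half of the radius.
lemma lintegral_lintegral_lineMap_cond_ball_le (x₀ : V) (hr : 0 < r) (hs : 0 < s)
    (ht : t ∈ Icc (0 : ℝ) 1) {G : V → ℝ≥0∞} (hG : Measurable G) :
    ∫⁻ x, ∫⁻ a, G (lineMap x a t) ∂μ[|ball x₀ s] ∂μ[|ball x₀ r] ≤
      2 ^ finrank ℝ V * ∫⁻ y, G y ∂μ[|ball x₀ ((1 - t) * r + t * s)] := by
  have := isProbabilityMeasure_cond_ball μ x₀ hr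
  have := isProbabilityMeasure_cond_ball μ x₀ hs
  rcases le_total (t * s) ((1 - t) * r) with hts | hts
  · have ht1 : t < 1 := by
      by_contra! h
      nlinarith [ht.2, mul_pos (zero_lt_one.trans_le h) hs]
    have hcont : Continuous fun q : V × V => lineMap q.1 q.2 t := by fun_prop
    rw [lintegral_lintegral_swap (f := fun x a => G (lineMap x a t))
      (hG.comp hcont.measurable).aemeasurable]
    grw [lintegral_mono_ae ((ae_cond_mem measurableSet_ball).mono fun a ha =>
      lintegral_lineMap_cond_ball_le μ ha ht.1 ht1 hts hG)]
    simp
  · have ht0 : 0 < t := by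
      by_contra! h
      nlinarith [ht.1]
    rw [add_comm ((1 - t) * r)]
    grw [lintegral_mono_ae ((ae_cond_mem measurableSet_ball).mono fun x hx => by
      simpa [AffineMap.lineMap_apply_one_sub] using
        lintegral_lineMap_cond_ball_le μ hx (sub_nonneg.2 ht.2) (sub_lt_self 1 ht0)
          (by simpa using hts) hG)]
    simp

lemma eLpNorm'_lineMapAverage_le (hp : 1 ≤ p) (x₀ : V) (hr : 0 < r) (hs : 0 < s)
    (ht : t ∈ Icc (0 : ℝ) 1) {f : V → F} (hf : Measurable fun x => ‖f x‖ₑ) :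
    eLpNorm' (lineMapAverage μ (ball x₀ s) t f) p μ[|ball x₀ r] ≤
      2 ^ finrank ℝ V * eLpNorm' f p μ[|ball x₀ ((1 - t) * r + t * s)] := by
  have := isProbabilityMeasure_cond_ball μ x₀ hs
  have hp0 : 0 < p := zero_lt_one.trans_le hp
  have hcont (x : V) : Continuous fun a : V => lineMap x a t := by fun_prop
  rw [← ENNReal.rpow_le_rpow_iff hp0, ENNReal.mul_rpow_of_nonneg _ _ hp0.le,
    ← lintegral_rpow_enorm_eq_rpow_eLpNorm' hp0, ← lintegral_rpow_enorm_eq_rpow_eLpNorm' hp0]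
  calc ∫⁻ x, lineMapAverage μ (ball x₀ s) t f x ^ p ∂μ[|ball x₀ r]
      ≤ ∫⁻ x, ∫⁻ a, ‖f (lineMap x a t)‖ₑ ^ p ∂μ[|ball x₀ s] ∂μ[|ball x₀ r] :=
        lintegral_mono fun x =>
          rpow_lintegral_le_lintegral_rpow hp (hf.comp (hcont x).measurable).aemeasurable
    _ ≤ 2 ^ finrank ℝ V * ∫⁻ y, ‖f y‖ₑ ^ p ∂μ[|ball x₀ ((1 - t) * r + t * s)] :=
        lintegral_lintegral_lineMap_cond_ball_le μ x₀ hr hs ht (hf.pow_const p)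
    _ ≤ (2 ^ finrank ℝ V) ^ p * _ := by
        gcongr
        exact ENNReal.le_rpow_self_of_one_le (one_le_pow₀ one_le_two) hp

lemma ofReal_rpow_mul_eLpNorm'_lineMapAverage_le (hp : 1 ≤ p) {θ : ℝ} (hθ : 0 ≤ θ) (x₀ : V)
    (hr : 0 < r) {T : ℝ} (hs : s ∈ Icc r T) (ht : t ∈ Icc (0 : ℝ) 1) {f : V → F}
    (hf : Measurable fun x => ‖f x‖ₑ) :
    ENNReal.ofReal (r ^ θ) * eLpNorm' (lineMapAverage μ (ball x₀ s) t f) p μ[|ball x₀ r] ≤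
      2 ^ finrank ℝ V * morreySupOn μ p θ x₀ (Icc r T) f := by
  set σ := (1 - t) * r + t * s
  have hrσ : r ≤ σ := by nlinarith [hs.1, ht.1]
  have hσT : σ ≤ T := by nlinarith [hs.1, hs.2, ht.2]
  calc ENNReal.ofReal (r ^ θ) * eLpNorm' (lineMapAverage μ (ball x₀ s) t f) p μ[|ball x₀ r]
      ≤ ENNReal.ofReal (σ ^ θ) * (2 ^ finrank ℝ V * eLpNorm' f p μ[|ball x₀ σ]) := by
        gcongr
        exact eLpNorm'_lineMapAverage_le μ hp x₀ hr (hr.trans_le hs.1) ht hf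
    _ = 2 ^ finrank ℝ V * (ENNReal.ofReal (σ ^ θ) * eLpNorm' f p μ[|ball x₀ σ]) :=
        mul_left_comm _ _ _
    _ ≤ _ := by
        gcongr
        exact le_iSup₂_of_le σ ⟨hrσ, hσT⟩ le_rfl

lemma ofReal_rpow_mul_eLpNorm'_lintegral_lineMapAverage_le (hp : 1 ≤ p) {θ : ℝ} (hθ : 0 ≤ θ)
    (x₀ : V) (hr : 0 < r) {T : ℝ} (hs : s ∈ Icc r T) {τ : ℝ} (hτ : τ ∈ Ioc (0 : ℝ) 1)
    {f : V → F} (hf : Measurable fun x => ‖f x‖ₑ) :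
    ENNReal.ofReal (r ^ θ) * eLpNorm'
        (fun x => ∫⁻ t, lineMapAverage μ (ball x₀ s) t f x ∂volume[|Icc 0 τ]) p μ[|ball x₀ r] ≤
      2 ^ finrank ℝ V * morreySupOn μ p θ x₀ (Icc r T) f := by
  have hrθ : ENNReal.ofReal (r ^ θ) ≠ 0 := by simp [Real.rpow_pos_of_pos hr]
  have : IsProbabilityMeasure (volume[|Icc 0 τ]) :=
    ProbabilityTheory.cond_isProbabilityMeasure_of_finite (by simp [hτ.1]) (by simp)
  rw [mul_comm, ← ENNReal.le_div_iff_mul_le (.inl hrθ) (.inl ENNReal.ofReal_ne_top)]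
  refine eLpNorm'_lintegral_le hp (measurable_lineMapAverage μ hf _) ?_
  filter_upwards [ae_cond_mem measurableSet_Icc] with t ht
  rw [ENNReal.le_div_iff_mul_le (.inl hrθ) (.inl ENNReal.ofReal_ne_top), mul_comm]
  exact ofReal_rpow_mul_eLpNorm'_lineMapAverage_le μ hp hθ x₀ hr hs ⟨ht.1, ht.2.trans hτ.2⟩ hf

lemma ofReal_rpow_mul_eLpNorm'_le_of_forall_enorm_le_lineMapAverage {G X : Type*}
    [NormedAddCommGroup G] [NormedAddCommGroup X] (hp : 1 ≤ p) {θ : ℝ} (hθ : 0 ≤ θ) {x₀ : V}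
    (hr : 0 < r) {T : ℝ} (hs : s ∈ Icc r T) {τ : ℝ} (hτ : τ ∈ Ioc (0 : ℝ) 1) {f : V → F}
    {H : V → G} {g : V → X} (hf : Measurable fun x => ‖f x‖ₑ) (hH : Measurable fun x => ‖H x‖ₑ)
    {b C k : ℝ≥0∞} (hb : b ≠ ∞) (hC : C ≠ ∞) (hk : k ≠ ∞)
    (h : ∀ x ∈ ball x₀ r, b * ‖g x‖ₑ ≤ C * (lineMapAverage μ (ball x₀ s) τ f x + ‖f x‖ₑ +
      k * ∫⁻ t, lineMapAverage μ (ball x₀ s) t H x ∂volume[|Icc 0 τ])) :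
    b * (ENNReal.ofReal (r ^ θ) * eLpNorm' g p μ[|ball x₀ r]) ≤ C * 2 ^ finrank ℝ V *
      (2 * morreySupOn μ p θ x₀ (Icc r T) f + k * morreySupOn μ p θ x₀ (Icc r T) H) := by
  set Sf := morreySupOn μ p θ x₀ (Icc r T) f
  set SH := morreySupOn μ p θ x₀ (Icc r T) H
  set A := lineMapAverage μ (ball x₀ s) τ f
  set B := fun x => ∫⁻ t, lineMapAverage μ (ball x₀ s) t H x ∂volume[|Icc 0 τ]
  have hA : Measurable A :=
    (measurable_lineMapAverage μ hf (ball x₀ s)).of_uncurry_right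
  have hB : Measurable B := (measurable_lineMapAverage μ hH _).lintegral_prod_right'
  have hself : ENNReal.ofReal (r ^ θ) * eLpNorm' f p μ[|ball x₀ r] ≤ Sf :=
    le_iSup₂_of_le r ⟨le_rfl, hs.1.trans hs.2⟩ le_rfl
  calc b * (ENNReal.ofReal (r ^ θ) * eLpNorm' g p μ[|ball x₀ r])
      = ENNReal.ofReal (r ^ θ) * (b * eLpNorm' g p μ[|ball x₀ r]) := mul_left_comm _ _ _
    _ ≤ ENNReal.ofReal (r ^ θ) * (C * (eLpNorm' A p μ[|ball x₀ r] +
          eLpNorm' f p μ[|ball x₀ r] + k * eLpNorm' B p μ[|ball x₀ r])) := by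
        gcongr ENNReal.ofReal (r ^ θ) * ?_
        exact const_mul_eLpNorm'_le_of_forall_enorm_le hp hb hC hk hA hf hB
          ((ae_cond_mem measurableSet_ball).mono h)
    _ = C * (ENNReal.ofReal (r ^ θ) * eLpNorm' A p μ[|ball x₀ r] +
          ENNReal.ofReal (r ^ θ) * eLpNorm' f p μ[|ball x₀ r] +
          k * (ENNReal.ofReal (r ^ θ) * eLpNorm' B p μ[|ball x₀ r])) := by ring
    _ ≤ C * (2 ^ finrank ℝ V * Sf + 2 ^ finrank ℝ V * Sf + k * (2 ^ finrank ℝ V * SH)) := by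
        gcongr C * (?_ + ?_ + k * ?_)
        · exact ofReal_rpow_mul_eLpNorm'_lineMapAverage_le μ hp hθ x₀ hr hs
            (Ioc_subset_Icc_self hτ) hf
        · exact hself.trans (le_mul_of_one_le_left' (one_le_pow₀ one_le_two))
        · exact ofReal_rpow_mul_eLpNorm'_lintegral_lineMapAverage_le μ hp hθ x₀ hr hs hτ hH
    _ = C * 2 ^ finrank ℝ V * (2 * Sf + k * SH) := by ring

end SegmentAverages

section Geometry

variable {V F : Type*} [NormedAddCommGroup V] [NormedSpace ℝ V] [NormedAddCommGroup F]
  [NormedSpace ℝ F]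

lemma exists_ball_forall_le_norm_apply_sub (ξ : V →L[ℝ] F) (x z : V) {ρ : ℝ} (hρ : 0 < ρ) :
    ∃ w, ball w (ρ / 4) ⊆ ball z ρ ∧ ∀ a ∈ ball w (ρ / 4), ρ / 8 * ‖ξ‖ ≤ ‖ξ (a - x)‖ := by
  obtain hξ | hξ := (norm_nonneg ξ).eq_or_lt
  · exact ⟨z, ball_subset_ball (by linarith), fun a _ => by simp [← hξ]⟩
  obtain ⟨v, hv, hξv⟩ := ξ.exists_lt_apply_of_lt_opNorm (half_lt_self hξ)
  obtain ⟨w, hwz, hw⟩ : ∃ w, dist w z ≤ 3 * ρ / 4 ∧ 3 * ρ / 8 * ‖ξ‖ ≤ ‖ξ (w - x)‖ := by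
    set b := (3 * ρ / 4) • v
    have hb : ‖b‖ ≤ 3 * ρ / 4 := by
      rw [norm_smul, Real.norm_of_nonneg (by positivity)]
      nlinarith
    have hξb : 3 * ρ / 8 * ‖ξ‖ ≤ ‖ξ b‖ := by
      rw [map_smul, norm_smul, Real.norm_of_nonneg (by positivity)]
      nlinarith
    have hsum : 2 * ‖ξ b‖ ≤ ‖ξ (z + b - x)‖ + ‖ξ (z - b - x)‖ := by
      have : ξ (z + b - x) - ξ (z - b - x) = (2 : ℝ) • ξ b := by
        rw [← map_sub, ← map_smul, two_smul]; congr 1; abel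
      calc 2 * ‖ξ b‖ = ‖ξ (z + b - x) - ξ (z - b - x)‖ := by rw [this, norm_smul]; simp
        _ ≤ _ := norm_sub_le _ _
    rcases le_total ‖ξ b‖ ‖ξ (z + b - x)‖ with h | h
    · exact ⟨z + b, by simpa using hb, hξb.trans h⟩
    · exact ⟨z - b, by simpa using hb, by linarith⟩
  refine ⟨w, ball_subset_ball' (by linarith), fun a ha => ?_⟩
  have hdiff : ‖ξ (w - a)‖ ≤ ‖ξ‖ * (ρ / 4) :=
    ξ.le_opNorm_of_le (by rw [← dist_eq_norm, dist_comm]; exact (mem_ball.1 ha).le)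
  calc ρ / 8 * ‖ξ‖ ≤ ‖ξ (w - x)‖ - ‖ξ (w - a)‖ := by linarith
    _ ≤ ‖ξ (w - x) - ξ (w - a)‖ := norm_sub_norm_le _ _
    _ = ‖ξ (a - x)‖ := by rw [← map_sub, sub_sub_sub_cancel_left]

lemma exists_ball_subset_ball_inter_ball {x₀ y : V} {R s : ℝ} (hx₀ : x₀ ∈ ball y R) (hs : 0 < s)
    (hsR : s ≤ 2 * R) : ∃ z, ball z (s / 4) ⊆ ball x₀ s ∩ ball y R := by
  have hR : 0 < R := pos_of_mem_ball hx₀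
  have hk : s / (4 * R) * R = s / 4 := by field_simp
  have hk1 : s / (4 * R) ≤ 1 := by rw [div_le_one₀ (by positivity)]; linarith
  refine ⟨lineMap x₀ y (s / (4 * R)), subset_inter (ball_subset_ball' ?_) (ball_subset_ball' ?_)⟩
  · rw [dist_lineMap_left, Real.norm_of_nonneg (by positivity)]
    nlinarith [mem_ball.1 hx₀, div_pos hs (by positivity : 0 < 4 * R)]
  · rw [dist_lineMap_right, Real.norm_of_nonneg (by linarith)]
    nlinarith [mem_ball.1 hx₀]

lemma exists_ball_subset_inter_forall_le_norm_apply_sub {x₀ y : V} {R s : ℝ}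
    (hx₀ : x₀ ∈ ball y R) (hs : 0 < s) (hsR : s ≤ 2 * R) (ξ : V →L[ℝ] F) (x : V) :
    ∃ w, ball w (s / 16) ⊆ ball x₀ s ∩ ball y R ∧
      ∀ a ∈ ball w (s / 16), s / 32 * ‖ξ‖ ≤ ‖ξ (a - x)‖ := by
  obtain ⟨z, hz⟩ := exists_ball_subset_ball_inter_ball hx₀ hs hsR
  obtain ⟨w, hwz, hw⟩ := exists_ball_forall_le_norm_apply_sub ξ x z (by positivity : 0 < s / 4)
  rw [show s / 4 / 4 = s / 16 by ring] at hwz hw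
  rw [show s / 4 / 8 = s / 32 by ring] at hw
  exact ⟨w, hwz.trans hz, hw⟩

end Geometry

section Taylor

variable {V F : Type*} [NormedAddCommGroup V] [NormedSpace ℝ V] [NormedAddCommGroup F]
  [NormedSpace ℝ F]

lemma enorm_sub_le_lintegral_of_hasDerivAt {f f' : ℝ → F} {a b : ℝ} (hab : a ≤ b)
    (hf : ∀ t ∈ Icc a b, HasDerivAt f (f' t) t) (hf' : ContinuousOn f' (Icc a b)) :
    ‖f b - f a‖ₑ ≤ ∫⁻ t in Icc a b, ‖f' t‖ₑ := by
  obtain rfl | hlt := hab.eq_or_lt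
  · simp
  have hderiv : EqOn (derivWithin f (Icc a b)) f' (Icc a b) := fun t ht =>
    (hf t ht).hasDerivWithinAt.derivWithin (uniqueDiffOn_Icc hlt t ht)
  have hC1 : ContDiffOn ℝ 1 f (Icc a b) := by
    rw [contDiffOn_one_iff_derivWithin (uniqueDiffOn_Icc hlt)]
    exact ⟨fun t ht => (hf t ht).differentiableAt.differentiableWithinAt, hf'.congr hderiv⟩
  calc ‖f b - f a‖ₑ ≤ ∫⁻ t in Icc a b, ‖derivWithin f (Icc a b) t‖ₑ :=
        enorm_sub_le_lintegral_derivWithin_Icc_of_contDiffOn_Icc hC1 hab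
    _ = ∫⁻ t in Icc a b, ‖f' t‖ₑ :=
        setLIntegral_congr_fun measurableSet_Icc fun t ht => by simp only [hderiv ht]

lemma enorm_sub_sub_smul_le_lintegral_of_hasDerivAt {g g' g'' : ℝ → F} {τ : ℝ} (hτ : 0 ≤ τ)
    (hg : ∀ t ∈ Icc 0 τ, HasDerivAt g (g' t) t) (hg' : ∀ t ∈ Icc 0 τ, HasDerivAt g' (g'' t) t)
    (hg'' : ContinuousOn g'' (Icc 0 τ)) :
    ‖g τ - g 0 - τ • g' 0‖ₑ ≤ ENNReal.ofReal τ * ∫⁻ t in Icc 0 τ, ‖g'' t‖ₑ := by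
  have hcont : ContinuousOn (fun t => g' t - g' 0) (Icc 0 τ) := fun t ht =>
    (hg' t ht).continuousAt.continuousWithinAt.sub continuousWithinAt_const
  have hderiv : ∀ t ∈ Icc 0 τ, HasDerivAt (fun t => g t - t • g' 0) (g' t - g' 0) t :=
    fun t ht => by simpa using (hg t ht).fun_sub ((hasDerivAt_id t).smul_const (g' 0))
  calc ‖g τ - g 0 - τ • g' 0‖ₑ = ‖g τ - τ • g' 0 - (g 0 - (0 : ℝ) • g' 0)‖ₑ := by
        rw [zero_smul, sub_zero, sub_right_comm]
    _ ≤ ∫⁻ t in Icc 0 τ, ‖g' t - g' 0‖ₑ := enorm_sub_le_lintegral_of_hasDerivAt hτ hderiv hcont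
    _ ≤ ∫⁻ _ in Icc 0 τ, ∫⁻ t in Icc 0 τ, ‖g'' t‖ₑ := by
        refine setLIntegral_mono' measurableSet_Icc fun t ht => ?_
        have hsub : Icc 0 t ⊆ Icc 0 τ := Icc_subset_Icc_right ht.2
        exact (enorm_sub_le_lintegral_of_hasDerivAt ht.1 (fun s hs => hg' s (hsub hs))
          (hg''.mono hsub)).trans (lintegral_mono_set hsub)
    _ = ENNReal.ofReal τ * ∫⁻ t in Icc 0 τ, ‖g'' t‖ₑ := by
        rw [setLIntegral_const, Real.volume_Icc, sub_zero, mul_comm]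

lemma hasDerivAt_comp_lineMap {f : V → F} {x a : V} {t : ℝ}
    (hf : DifferentiableAt ℝ f (lineMap x a t)) :
    HasDerivAt (fun t => f (lineMap x a t)) (fderiv ℝ f (lineMap x a t) (a - x)) t :=
  hf.hasFDerivAt.comp_hasDerivAt t AffineMap.hasDerivAt_lineMap

lemma enorm_smul_fderiv_apply_sub_le {Ω : Set V} (hΩ : IsOpen Ω) (hconv : Convex ℝ Ω) {u : V → F}
    (hu : ContDiffOn ℝ 2 u Ω) {x a : V} (hx : x ∈ Ω) (ha : a ∈ Ω) {τ : ℝ} (hτ : τ ∈ Icc (0 : ℝ) 1)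
    (c : F) :
    ‖τ • fderiv ℝ u x (a - x)‖ₑ ≤ ‖u (lineMap x a τ) - c‖ₑ + ‖u x - c‖ₑ +
      ENNReal.ofReal τ * (‖a - x‖ₑ ^ 2 *
        ∫⁻ t in Icc 0 τ, ‖fderiv ℝ (fderiv ℝ u) (lineMap x a t)‖ₑ) := by
  have hDu : ContDiffOn ℝ 1 (fderiv ℝ u) Ω := hu.fderiv_of_isOpen hΩ le_rfl
  have hmem : ∀ t ∈ Icc 0 τ, lineMap x a t ∈ Ω := fun t ht =>
    hconv.lineMap_mem hx ha ⟨ht.1, ht.2.trans hτ.2⟩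
  have hu1 : ∀ t ∈ Icc 0 τ, DifferentiableAt ℝ u (lineMap x a t) := fun t ht =>
    (hu.differentiableOn two_ne_zero).differentiableAt (hΩ.mem_nhds (hmem t ht))
  have hDu1 : ∀ t ∈ Icc 0 τ, DifferentiableAt ℝ (fderiv ℝ u) (lineMap x a t) := fun t ht =>
    (hDu.differentiableOn one_ne_zero).differentiableAt (hΩ.mem_nhds (hmem t ht))
  have hderiv2 : ∀ t ∈ Icc 0 τ, HasDerivAt (fun t => fderiv ℝ u (lineMap x a t) (a - x))
      (fderiv ℝ (fderiv ℝ u) (lineMap x a t) (a - x) (a - x)) t := fun t ht => by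
    simpa using (hasDerivAt_comp_lineMap (hDu1 t ht)).clm_apply (hasDerivAt_const t (a - x))
  have hcont : ContinuousOn
      (fun t => fderiv ℝ (fderiv ℝ u) (lineMap x a t) (a - x) (a - x)) (Icc 0 τ) :=
    (((hDu.continuousOn_fderiv_of_isOpen hΩ le_rfl).comp (by fun_prop) hmem).clm_apply
      continuousOn_const).clm_apply continuousOn_const
  have htaylor := enorm_sub_sub_smul_le_lintegral_of_hasDerivAt hτ.1
    (fun t ht => hasDerivAt_comp_lineMap (hu1 t ht)) hderiv2 hcont
  simp only [AffineMap.lineMap_apply_zero] at htaylor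
  set y := lineMap x a τ
  calc ‖τ • fderiv ℝ u x (a - x)‖ₑ
      = ‖(u y - c) - (u x - c) - (u y - u x - τ • fderiv ℝ u x (a - x))‖ₑ := by
        congr 1; abel
    _ ≤ ‖u y - c‖ₑ + ‖u x - c‖ₑ + ‖u y - u x - τ • fderiv ℝ u x (a - x)‖ₑ :=
        enorm_sub_le.trans (by gcongr; exact enorm_sub_le)
    _ ≤ _ := by
        grw [htaylor, ← lintegral_const_mul' (‖a - x‖ₑ ^ 2) _ (by finiteness)]
        gcongr with t
        grw [ContinuousLinearMap.le_opENorm₂, mul_assoc, ← sq, mul_comm]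

end Taylor

section Interpolation

variable {V F : Type*} [NormedAddCommGroup V] [NormedSpace ℝ V] [NormedAddCommGroup F]
  [NormedSpace ℝ F] {u : V → F} {x₀ y : V} {R r s τ : ℝ}

lemma enorm_smul_fderiv_apply_sub_le_indicator {Ω : Set V} (hΩ : IsOpen Ω) (hconv : Convex ℝ Ω)
    (hu : ContDiffOn ℝ 2 u Ω) {x a : V} (hx : x ∈ Ω) (ha : a ∈ Ω) {D τ : ℝ} (hD : ‖a - x‖ ≤ D)
    (hτ : τ ∈ Ioc (0 : ℝ) 1) (c : F) :
    ‖τ • fderiv ℝ u x (a - x)‖ₑ ≤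
      ‖Ω.indicator (u · - c) (lineMap x a τ)‖ₑ + ‖Ω.indicator (u · - c) x‖ₑ +
        ENNReal.ofReal ((τ * D) ^ 2) *
          ∫⁻ t, ‖Ω.indicator (fderiv ℝ (fderiv ℝ u)) (lineMap x a t)‖ₑ ∂volume[|Icc 0 τ] := by
  have hmem : ∀ t ∈ Icc 0 τ, lineMap x a t ∈ Ω := fun t ht =>
    hconv.lineMap_mem hx ha ⟨ht.1, ht.2.trans hτ.2⟩
  have hint : ∫⁻ t in Icc 0 τ, ‖fderiv ℝ (fderiv ℝ u) (lineMap x a t)‖ₑ =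
      ENNReal.ofReal τ *
        ∫⁻ t, ‖Ω.indicator (fderiv ℝ (fderiv ℝ u)) (lineMap x a t)‖ₑ ∂volume[|Icc 0 τ] := by
    rw [setLIntegral_congr_fun measurableSet_Icc fun t ht => by
        rw [← indicator_of_mem (hmem t ht) (fderiv ℝ (fderiv ℝ u))],
      setLIntegral_eq_measure_mul_lintegral_cond (by simp [hτ.1]) (by simp), Real.volume_Icc,
      sub_zero]
  have hD' : ‖a - x‖ₑ ≤ ENNReal.ofReal D := by
    rw [← ofReal_norm]
    exact ENNReal.ofReal_le_ofReal hD
  have hτD : ENNReal.ofReal ((τ * D) ^ 2) = ENNReal.ofReal τ ^ 2 * ENNReal.ofReal D ^ 2 := by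
    rw [ENNReal.ofReal_pow (mul_nonneg hτ.1.le ((norm_nonneg _).trans hD)),
      ENNReal.ofReal_mul hτ.1.le, mul_pow]
  rw [indicator_of_mem hx, indicator_of_mem (hmem τ ⟨hτ.1.le, le_rfl⟩), hτD]
  grw [enorm_smul_fderiv_apply_sub_le hΩ hconv hu hx ha (Ioc_subset_Icc_self hτ) c, hint, hD']
  exact le_of_eq (by ring)

lemma exists_ball_forall_enorm_fderiv_le (hu : ContDiffOn ℝ 2 u (ball y R)) (hx₀ : x₀ ∈ ball y R)
    (hs : 0 < s) (hsR : s ≤ 2 * R) (hτ : τ ∈ Ioc (0 : ℝ) 1) (c : F) {x : V}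
    (hx : x ∈ ball x₀ s ∩ ball y R) :
    ∃ w, ball w (s / 16) ⊆ ball x₀ s ∧ ∀ a ∈ ball w (s / 16),
      ENNReal.ofReal (τ * s / 32) * ‖fderiv ℝ u x‖ₑ ≤
        ‖(ball y R).indicator (u · - c) (lineMap x a τ)‖ₑ + ‖(ball y R).indicator (u · - c) x‖ₑ +
          ENNReal.ofReal (4 * (τ * s) ^ 2) * ∫⁻ t,
            ‖(ball y R).indicator (fderiv ℝ (fderiv ℝ u)) (lineMap x a t)‖ₑ ∂volume[|Icc 0 τ] := by
  obtain ⟨w, hw, hDu⟩ :=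
    exists_ball_subset_inter_forall_le_norm_apply_sub hx₀ hs hsR (fderiv ℝ u x) x
  refine ⟨w, hw.trans inter_subset_left, fun a ha => ?_⟩
  have hτ0 := hτ.1
  have hax : ‖a - x‖ ≤ 2 * s := by
    rw [← dist_eq_norm]
    linarith [dist_triangle_right a x x₀, mem_ball.1 (hw ha).1, mem_ball.1 hx.1]
  calc ENNReal.ofReal (τ * s / 32) * ‖fderiv ℝ u x‖ₑ
      = ENNReal.ofReal (τ * (s / 32 * ‖fderiv ℝ u x‖)) := by
        rw [← ofReal_norm, ← ENNReal.ofReal_mul (by positivity)]; congr 1; ring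
    _ ≤ ‖τ • fderiv ℝ u x (a - x)‖ₑ := by
        rw [← ofReal_norm, norm_smul, Real.norm_of_nonneg hτ0.le]
        gcongr
        exact hDu a ha
    _ ≤ _ := by
        rw [show 4 * (τ * s) ^ 2 = (τ * (2 * s)) ^ 2 by ring]
        exact enorm_smul_fderiv_apply_sub_le_indicator isOpen_ball (convex_ball y R) hu hx.2
          (hw ha).2 hax hτ c

variable [MeasurableSpace V] [BorelSpace V]

lemma measurable_enorm_indicator_fderiv_fderiv (hu : ContDiffOn ℝ 2 u (ball y R)) :
    Measurable fun x => ‖(ball y R).indicator (fderiv ℝ (fderiv ℝ u)) x‖ₑ :=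
  measurable_enorm_indicator (Y := V →L[ℝ] V →L[ℝ] F) measurableSet_ball <|
    (hu.fderiv_of_isOpen isOpen_ball le_rfl).continuousOn_fderiv_of_isOpen isOpen_ball le_rfl

variable [FiniteDimensional ℝ V] (μ : Measure V) [μ.IsAddHaarMeasure]

lemma ofReal_mul_enorm_fderiv_le (hu : ContDiffOn ℝ 2 u (ball y R)) (hx₀ : x₀ ∈ ball y R)
    (hs : 0 < s) (hsR : s ≤ 2 * R) (hτ : τ ∈ Ioc (0 : ℝ) 1) (c : F) {x : V}
    (hx : x ∈ ball x₀ s ∩ ball y R) :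
    ENNReal.ofReal (τ * s / 32) * ‖fderiv ℝ u x‖ₑ ≤ 16 ^ finrank ℝ V *
      (lineMapAverage μ (ball x₀ s) τ ((ball y R).indicator (u · - c)) x +
        ‖(ball y R).indicator (u · - c) x‖ₑ +
        ENNReal.ofReal (4 * (τ * s) ^ 2) * ∫⁻ t, lineMapAverage μ (ball x₀ s) t
          ((ball y R).indicator (fderiv ℝ (fderiv ℝ u))) x ∂volume[|Icc 0 τ]) := by
  obtain ⟨w, hw, hDu⟩ := exists_ball_forall_enorm_fderiv_le hu hx₀ hs hsR hτ c hx
  set f := (ball y R).indicator (u · - c)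
  set H := (ball y R).indicator (fderiv ℝ (fderiv ℝ u))
  have := isProbabilityMeasure_cond_ball μ w (by positivity : 0 < s / 16)
  have := isProbabilityMeasure_cond_ball μ x₀ hs
  have hf : Measurable fun z => ‖f z‖ₑ :=
    measurable_enorm_indicator measurableSet_ball (hu.continuousOn.sub continuousOn_const)
  have hH : Measurable fun z => ‖H z‖ₑ := measurable_enorm_indicator_fderiv_fderiv hu
  have hfline : Measurable fun a => ‖f (lineMap x a τ)‖ₑ :=
    hf.comp (by fun_prop : Continuous fun a : V => lineMap x a τ).measurable
  have hHline : Measurable fun q : V × ℝ => ‖H (lineMap x q.1 q.2)‖ₑ :=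
    hH.comp (by fun_prop : Continuous fun q : V × ℝ => lineMap x q.1 q.2).measurable
  set K := ENNReal.ofReal (4 * (τ * s) ^ 2)
  calc ENNReal.ofReal (τ * s / 32) * ‖fderiv ℝ u x‖ₑ
      = ∫⁻ _, ENNReal.ofReal (τ * s / 32) * ‖fderiv ℝ u x‖ₑ ∂μ[|ball w (s / 16)] := by simp
    _ ≤ ∫⁻ a, ‖f (lineMap x a τ)‖ₑ + ‖f x‖ₑ + K * ∫⁻ t, ‖H (lineMap x a t)‖ₑ ∂volume[|Icc 0 τ]
          ∂μ[|ball w (s / 16)] :=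
        lintegral_mono_ae ((ae_cond_mem measurableSet_ball).mono hDu)
    _ ≤ ∫⁻ a, ‖f (lineMap x a τ)‖ₑ + ‖f x‖ₑ + K * ∫⁻ t, ‖H (lineMap x a t)‖ₑ ∂volume[|Icc 0 τ]
          ∂(ENNReal.ofReal 16 ^ finrank ℝ V • μ[|ball x₀ s]) :=
        lintegral_mono' (cond_ball_le_smul_cond_ball μ (by norm_num) (by linarith) hw) le_rfl
    _ = _ := by
        rw [lintegral_smul_measure, smul_eq_mul, ENNReal.ofReal_ofNat,
          lintegral_add_left (hfline.add_const _), lintegral_add_left hfline,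
          lintegral_const_mul' _ _ ENNReal.ofReal_ne_top,
          lintegral_lintegral_swap hHline.aemeasurable, lintegral_const, measure_univ, mul_one]
        rfl

lemma ofReal_mul_eLpNorm'_fderiv_le (hu : ContDiffOn ℝ 2 u (ball y R)) (hx₀ : x₀ ∈ ball y R)
    {p θ : ℝ} (hp : 1 ≤ p) (hθ : 0 ≤ θ) (hr : 0 < r) (hs : s ∈ Icc r (2 * R))
    (hτ : τ ∈ Ioc (0 : ℝ) 1) (c : F) :
    ENNReal.ofReal (τ * s / 32) * (ENNReal.ofReal (r ^ θ) *
        eLpNorm' ((ball y R).indicator (fderiv ℝ u)) p μ[|ball x₀ r]) ≤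
      32 ^ finrank ℝ V *
        (2 * morreySupOn μ p θ x₀ (Icc r (2 * R)) ((ball y R).indicator (u · - c)) +
          ENNReal.ofReal (4 * (τ * s) ^ 2) * morreySupOn μ p θ x₀ (Icc r (2 * R))
            ((ball y R).indicator (fderiv ℝ (fderiv ℝ u)))) := by
  rw [show (32 : ℝ≥0∞) = 16 * 2 by norm_num, mul_pow]
  have hf : Measurable fun x => ‖(ball y R).indicator (u · - c) x‖ₑ :=
    measurable_enorm_indicator measurableSet_ball (hu.continuousOn.sub continuousOn_const)
  have hH := measurable_enorm_indicator_fderiv_fderiv hu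
  refine ofReal_rpow_mul_eLpNorm'_le_of_forall_enorm_le_lineMapAverage
    μ hp hθ hr hs hτ hf hH ENNReal.ofReal_ne_top (by finiteness)
    ENNReal.ofReal_ne_top fun x hx => ?_
  by_cases hxR : x ∈ ball y R
  · simpa only [indicator_of_mem hxR] using ofReal_mul_enorm_fderiv_le μ hu hx₀
      (hr.trans_le hs.1) hs.2 hτ c ⟨ball_subset_ball hs.1 hx, hxR⟩
  · rw [indicator_of_notMem hxR, ← ofReal_norm, norm_zero, ENNReal.ofReal_zero, mul_zero]
    exact zero_le

theorem eLpNorm'_fderiv_le_morreySupOn (hu : ContDiffOn ℝ 2 u (ball y R)) (hx₀ : x₀ ∈ ball y R)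
    {p θ h : ℝ} (hp : 1 ≤ p) (hθ : 0 ≤ θ) (hr : r ∈ Ioc 0 (2 * R)) (hh : h ∈ Ioc 0 (2 * R))
    (c : F) :
    ENNReal.ofReal (r ^ θ) * eLpNorm' ((ball y R).indicator (fderiv ℝ u)) p μ[|ball x₀ r] ≤
      ENNReal.ofReal (128 * 32 ^ finrank ℝ V * h) * morreySupOn μ p θ x₀ (Icc r (2 * R))
          ((ball y R).indicator (fderiv ℝ (fderiv ℝ u))) +
        ENNReal.ofReal (64 * 32 ^ finrank ℝ V * h⁻¹) * morreySupOn μ p θ x₀ (Icc r (2 * R))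
          ((ball y R).indicator (u · - c)) := by
  have hh0 := hh.1
  set s := max r h
  have hs0 : 0 < s := lt_max_of_lt_left hr.1
  have hτ : h / s ∈ Ioc (0 : ℝ) 1 := ⟨div_pos hh0 hs0, (div_le_one₀ hs0).2 (le_max_right r h)⟩
  have hbound := ofReal_mul_eLpNorm'_fderiv_le μ hu hx₀ hp hθ hr.1
    ⟨le_max_left r h, max_le hr.2 hh.2⟩ hτ c
  rw [div_mul_cancel₀ h hs0.ne', ENNReal.mul_le_iff_le_inv (by simpa) ENNReal.ofReal_ne_top,
    ← ENNReal.ofReal_inv_of_pos (by positivity)] at hbound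
  refine hbound.trans_eq ?_
  have hcoefD2u : (128 * 32 ^ finrank ℝ V * h : ℝ) =
      (h / 32)⁻¹ * 32 ^ finrank ℝ V * (4 * h ^ 2) := by
    field_simp; norm_num
  have hcoefu : (64 * 32 ^ finrank ℝ V * h⁻¹ : ℝ) = (h / 32)⁻¹ * 32 ^ finrank ℝ V * 2 := by
    field_simp; norm_num
  rw [hcoefD2u, hcoefu]
  simp only [ENNReal.ofReal_mul (by positivity : (0 : ℝ) ≤ (h / 32)⁻¹ * 32 ^ finrank ℝ V),
    ENNReal.ofReal_mul (by positivity : (0 : ℝ) ≤ (h / 32)⁻¹), ENNReal.ofReal_ofNat,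
    ENNReal.ofReal_pow (by norm_num : (0 : ℝ) ≤ 32)]
  ring

end Interpolation

section Hessian

variable {d : ℕ}

lemma abs_sum_mul_mul_le_frob (m : Matrix (Fin d) (Fin d) ℝ) (v w : E d) :
    |∑ i, ∑ j, v i * w j * m i j| ≤ frob m * ‖v‖ * ‖w‖ := by
  have hvw : ∑ i, ∑ j, (v i * w j) ^ 2 = (‖v‖ * ‖w‖) ^ 2 := by
    simp only [mul_pow, EuclideanSpace.real_norm_sq_eq, Finset.sum_mul_sum]
  have hm : frob m ^ 2 = ∑ i, ∑ j, m i j ^ 2 := Real.sq_sqrt (by positivity)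
  refine abs_le_of_sq_le_sq ?_ (mul_nonneg (mul_nonneg (Real.sqrt_nonneg _) (by simp)) (by simp))
  rw [mul_assoc, mul_pow, hm, mul_comm, ← hvw]
  simp only [← Finset.sum_product']
  exact Finset.sum_mul_sq_le_sq_mul_sq _ _ _

lemma fderiv_fderiv_apply_apply_eq_sum_hess {u : E d → ℝ} {z : E d}
    (hu : DifferentiableAt ℝ (fderiv ℝ u) z) (v w : E d) :
    fderiv ℝ (fderiv ℝ u) z v w = ∑ i, ∑ j, v i * w j * hess u z i j := by
  have hsum (v : E d) : v = ∑ i, v i • EuclideanSpace.single i (1 : ℝ) := by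
    simpa using ((EuclideanSpace.basisFun (Fin d) ℝ).sum_repr v).symm
  have hhess (i j : Fin d) : hess u z i j =
      fderiv ℝ (fderiv ℝ u) z (EuclideanSpace.single i 1) (EuclideanSpace.single j 1) := by
    rw [hess, Matrix.of_apply,
      (hu.hasFDerivAt.clm_apply (hasFDerivAt_const (EuclideanSpace.single j 1) z)).fderiv]
    simp
  conv_lhs => rw [hsum v, hsum w]
  simp only [map_sum, map_smul, FunLike.coe_sum, FunLike.coe_smul, Finset.sum_apply,
    Pi.smul_apply, smul_eq_mul, hhess, Finset.mul_sum, mul_assoc]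
  rw [Finset.sum_comm]
  simp only [mul_left_comm]

lemma norm_fderiv_fderiv_le_frob_hess {u : E d → ℝ} {z : E d}
    (hu : DifferentiableAt ℝ (fderiv ℝ u) z) : ‖fderiv ℝ (fderiv ℝ u) z‖ ≤ frob (hess u z) :=
  ContinuousLinearMap.opNorm_le_bound₂ _ (Real.sqrt_nonneg _) fun v w => by
    rw [fderiv_fderiv_apply_apply_eq_sum_hess hu, Real.norm_eq_abs]
    exact abs_sum_mul_mul_le_frob _ v w

lemma nLp_eq_eLpNorm' {p : ℝ} (hp : 0 ≤ p) (B : Set (E d)) (g : E d → ℝ) :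
    nLp p B g = eLpNorm' g p volume[|B] := by
  simp only [nLp, eLpNorm', ProbabilityTheory.cond, lintegral_smul_measure, smul_eq_mul,
    Real.enorm_eq_ofReal_abs, ENNReal.ofReal_rpow_of_nonneg (abs_nonneg _) hp]

lemma morreySupOn_indicator_fderiv_fderiv_le {p θ : ℝ} (hp : 0 ≤ p) {x₀ : E d} {I : Set ℝ}
    {Ω : Set (E d)} (hΩ : IsOpen Ω) {u : E d → ℝ} (hu : ContDiffOn ℝ 2 u Ω) :
    morreySupOn volume p θ x₀ I (Ω.indicator (fderiv ℝ (fderiv ℝ u))) ≤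
      ⨆ s ∈ I, ENNReal.ofReal (s ^ θ) *
        nLp p (ball x₀ s) (Ω.indicator fun z => frob (hess u z)) := by
  simp only [nLp_eq_eLpNorm' hp]
  refine morreySupOn_mono hp fun z => ?_
  by_cases hz : z ∈ Ω
  · have hDu : DifferentiableAt ℝ (fderiv ℝ u) z :=
      ((hu.fderiv_of_isOpen hΩ le_rfl).differentiableOn one_ne_zero).differentiableAt
        (hΩ.mem_nhds hz)
    rw [indicator_of_mem hz, indicator_of_mem hz]
    exact (norm_fderiv_fderiv_le_frob_hess hDu).trans (Real.le_norm_self _)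
  · rw [indicator_of_notMem hz]
    exact (norm_zero (E := E d →L[ℝ] E d →L[ℝ] ℝ)).trans_le (norm_nonneg _)

end Hessian

theorem stmt_7_general (d : ℕ) :
    ∃ N : ℝ, 0 < N ∧
      ∀ p μ : ℝ, 1 ≤ p → 0 ≤ μ → ∀ R : ℝ, ∀ x₀ ∈ ball (0 : E d) R,
        ∀ u : E d → ℝ, ContDiffOn ℝ 2 u (ball (0 : E d) R) →
          ∀ ε ∈ Set.Ioc (0 : ℝ) 1, ∀ r : ℝ, 0 < r → r ≤ 2 * R → ∀ c : ℝ,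
            ENNReal.ofReal (r ^ μ) *
                nLp p (ball x₀ r)
                  ((ball (0 : E d) R).indicator fun z => ‖fderiv ℝ u z‖) ≤
              ENNReal.ofReal (N * ε * R) *
                  (⨆ s ∈ Set.Icc r (2 * R), ENNReal.ofReal (s ^ μ) *
                    nLp p (ball x₀ s)
                      ((ball (0 : E d) R).indicator fun z => frob (hess u z))) +
                ENNReal.ofReal (N * ε⁻¹ * R⁻¹) *
                  (⨆ s ∈ Set.Icc r (2 * R), ENNReal.ofReal (s ^ μ) *
                    nLp p (ball x₀ s)
                      ((ball (0 : E d) R).indicator fun z => u z - c)) := by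
  refine ⟨128 * 32 ^ d, by positivity, fun p μ hp hμ R x₀ hx₀ u hu ε hε r hr hrR c => ?_⟩
  have hR : 0 < R := pos_of_mem_ball hx₀
  have hp0 : 0 ≤ p := zero_le_one.trans hp
  have hε0 : 0 < ε := hε.1
  have hεR : ε * R ∈ Ioc 0 (2 * R) := ⟨mul_pos hε0 hR, by nlinarith [hε.2]⟩
  have hbound := eLpNorm'_fderiv_le_morreySupOn volume hu hx₀ hp hμ ⟨hr, hrR⟩ hεR c
  have hcoef : 64 * 32 ^ d * (ε * R)⁻¹ ≤ 128 * 32 ^ d * ε⁻¹ * R⁻¹ := by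
    rw [mul_inv, ← mul_assoc]
    gcongr
    norm_num
  grw [← morreySupOn_indicator_fderiv_fderiv_le hp0 isOpen_ball hu, ← hcoef]
  simp only [nLp_eq_eLpNorm' hp0]
  rw [eLpNorm'_indicator_norm, mul_assoc _ ε]
  rw [finrank_euclideanSpace_fin] at hbound
  exact hbound

/-- Estimate (4.7) of the paper's Lemma 4.4: Morrey interpolation inequality for the
gradient over balls `B_r(x₀)`. -/
theorem stmt_7 (d : ℕ) (hd : 1 ≤ d) (p μ : ℝ)
    (hp : 1 < p) (hμ : 0 < μ) (hμd : μ ≤ (d : ℝ) / p) :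
    ∃ N : ℝ, 0 < N ∧
      ∀ R : ℝ, 0 < R → ∀ x₀ ∈ ball (0 : E d) R,
        ∀ u : E d → ℝ, ContDiffOn ℝ 2 u (closedBall (0 : E d) R) →
          ∀ ε ∈ Set.Ioc (0 : ℝ) 1, ∀ r : ℝ, 0 < r → r ≤ 2 * R → ∀ c : ℝ,
            ENNReal.ofReal (r ^ μ) *
                nLp p (ball x₀ r)
                  ((ball (0 : E d) R).indicator fun z => ‖fderiv ℝ u z‖) ≤
              ENNReal.ofReal (N * ε * R) *
                  (⨆ s ∈ Set.Icc r (2 * R), ENNReal.ofReal (s ^ μ) *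
                    nLp p (ball x₀ s)
                      ((ball (0 : E d) R).indicator fun z => frob (hess u z))) +
                ENNReal.ofReal (N * ε⁻¹ * R⁻¹) *
                  (⨆ s ∈ Set.Icc r (2 * R), ENNReal.ofReal (s ^ μ) *
                    nLp p (ball x₀ s)
                      ((ball (0 : E d) R).indicator fun z => u z - c)) := by
  obtain ⟨N, hN, hbound⟩ := stmt_7_general d
  exact ⟨N, hN, fun R _ x₀ hx₀ u hu =>
    hbound p μ hp.le hμ.le R x₀ hx₀ u (hu.mono ball_subset_closedBall)⟩
end
end
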